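/- For general lines L_1,…,L_9 in P^3 (i.e., there exists a nonzero polynomial P in the 72 coordinates of spanning vectors a_1,b_1,…,a_9,b_9 ∈ ℂ^4 such that whenever P does not vanish, each pair a_i,b_i is linearly independent, the subspaces L_i = span{a_i,b_i} pairwise intersect only in 0, and the following holds): the ℂ-vector space of homogeneous polynomials F of degree 10 in ℂ[x_0,x_1,x_2,x_3] with F ∈ I(L_i)^3 for i = 1,…,4 and F ∈ I(L_i) for i = 5,…,9 has dimension exactly 1. Since binom(13,3) = 286 < 287 = 4·58 + 5·11, this system 𝓛_{10}(3,3,3,3,1,1,1,1,1) has negative virtual dimension, so it is special (unexpected). -/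

import Mathlib

open MvPolynomial

noncomputable section

abbrev C4 : Type := Fin 4 → ℂ
abbrev R3 : Type := MvPolynomial (Fin 4) ℂ

/-- The homogeneous ideal of the line in `P^3` corresponding to a linear subspace
`L ⊆ ℂ^4`: all polynomials vanishing identically on `L`. -/
def lineIdeal (L : Submodule ℂ C4) : Ideal R3 where
  carrier := {F | ∀ v ∈ L, eval v F = 0}
  add_mem' := by
    intro a b ha hb v hv
    simp [ha v hv, hb v hv]
  zero_mem' := by
    intro v hv
    simp
  smul_mem' := by
    intro c F hF v hv
    simp [smul_eq_mul, hF v hv]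

/-- The linear system `𝓛_d(m_1, …, m_s)`: homogeneous forms of degree `d`
vanishing to order `m i` along the line `L i`, as a `ℂ`-subspace. -/
def linSys (d : ℕ) {s : ℕ} (L : Fin s → Submodule ℂ C4) (m : Fin s → ℕ) :
    Submodule ℂ R3 :=
  homogeneousSubmodule (Fin 4) ℂ d ⊓
    ⨅ i, Submodule.restrictScalars ℂ ((lineIdeal (L i)) ^ (m i))

/-- A property `Q` holds for `s` *general* lines in `P^3`: there is a nonzero
polynomial `P` in the `8s` coordinates of spanning vectors such that whenever
`P` does not vanish, each pair of vectors is linearly independent, the spanned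
planes are pairwise disjoint, and `Q` holds for these lines. -/
def GeneralLines (s : ℕ) (Q : (Fin s → Submodule ℂ C4) → Prop) : Prop :=
  ∃ P : MvPolynomial (Fin s × Fin 2 × Fin 4) ℂ, P ≠ 0 ∧
    ∀ v : Fin s → Fin 2 → C4,
      MvPolynomial.eval (fun p => v p.1 p.2.1 p.2.2) P ≠ 0 →
      (∀ i, LinearIndependent ℂ ![v i 0, v i 1]) ∧
      (∀ i j, i ≠ j →
        Submodule.span ℂ {v i 0, v i 1} ⊓ Submodule.span ℂ {v j 0, v j 1} = ⊥) ∧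
      Q (fun i => Submodule.span ℂ {v i 0, v i 1})

/-!
Upper bound. It suffices to find one configuration and one point such that no nonzero form in the
system vanishes at the point, since this is an open condition on the lines. In the configuration
chosen, the four triple lines join the skew lines `x = 0` and `y = 0`, so that every bihomogeneous
component of a form is again triple along them, and the simple lines are `y = ζ ^ l (x₀, x₀ - x₁)`
with `ζ` a primitive fifth root of unity, so that they only constrain the sums of components over
residue classes modulo five. Restricted to the four quadrics through three of the triple lines and
to the quadric `x₀ y₁ = (x₀ - x₁) y₀` containing the simple lines, the components have too many
zeros for their degree; a form vanishing on sufficiently many sections of `ℙ¹ × ℙ¹` is zero. Only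
the component of bidegree `(5, 5)` survives, and the extra point kills it.

Existence. Four general lines have two common transversals, which may be taken to be `x = 0` and
`y = 0`. Forms of bidegrees `(10 - b, b)` with `2 ≤ b ≤ 8` make up a space of dimension `224`. On
such forms each triple line imposes only `6` conditions in each of the `7` bidegrees, hence `42`
instead of `58`, and `4 * 42 + 5 * 11 = 223`.
-/

/-! ### Bihomogeneous forms -/

theorem bind₁_isWeightedHomogeneous {R σ τ M : Type*} [CommSemiring R] [AddCommMonoid M]
    {w : σ → M} {w' : τ → M} {F : MvPolynomial σ R} {n : M} (hF : IsWeightedHomogeneous w F n)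
    {f : σ → MvPolynomial τ R} (hf : ∀ i, IsWeightedHomogeneous w' (f i) (w i)) :
    IsWeightedHomogeneous w' (bind₁ f F) n := by
  rw [bind₁, aeval_def, eval₂_eq]
  refine IsWeightedHomogeneous.sum _ _ n fun e he => ?_
  rw [← hF (mem_support_iff.1 he), algebraMap_eq]
  refine IsWeightedHomogeneous.C_mul ?_ _
  rw [Finsupp.weight_apply]
  exact IsWeightedHomogeneous.prod _ _ _ fun i _ => (hf i).pow _

/-- The weights of the bigrading of `K[x₀, x₁, y₀, y₁]` by degree in the `x`'s and in the `y`'s. -/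
def biweight : Fin 4 → ℕ × ℕ := ![(1, 0), (1, 0), (0, 1), (0, 1)]

/-- Forms of bidegree `(a, b)` in the pairs of variables `x₀, x₁` and `y₀, y₁`, the latter being
the variables with indices `2` and `3`. -/
def IsBihomogeneous {R : Type*} [CommSemiring R] (F : MvPolynomial (Fin 4) R) (a b : ℕ) : Prop :=
  IsWeightedHomogeneous biweight F (a, b)

theorem weight_biweight (e : Fin 4 →₀ ℕ) :
    Finsupp.weight biweight e = (e 0 + e 1, e 2 + e 3) := by
  simp [Finsupp.weight_apply, Finsupp.sum_fintype, Fin.sum_univ_four, biweight, -nsmul_eq_mul,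
    Prod.smul_mk]

namespace IsBihomogeneous

variable {R : Type*} [CommRing R] {F : MvPolynomial (Fin 4) R} {a b : ℕ}

theorem degrees_eq (hF : IsBihomogeneous F a b) {e : Fin 4 →₀ ℕ} (he : e ∈ F.support) :
    e 0 + e 1 = a ∧ e 2 + e 3 = b := by
  simpa [weight_biweight] using hF (mem_support_iff.1 he)

theorem aeval_scale {A : Type*} [CommRing A] [Algebra R A] (hF : IsBihomogeneous F a b)
    (s t x₀ x₁ y₀ y₁ : A) :
    aeval ![s * x₀, s * x₁, t * y₀, t * y₁] F = s ^ a * t ^ b * aeval ![x₀, x₁, y₀, y₁] F := by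
  simp only [aeval_def, eval₂_eq', Finset.mul_sum]
  refine Finset.sum_congr rfl fun e he => ?_
  obtain ⟨rfl, rfl⟩ := hF.degrees_eq he
  simp only [Fin.prod_univ_four, Matrix.cons_val]
  ring

theorem eval_scale (hF : IsBihomogeneous F a b) (s t x₀ x₁ y₀ y₁ : R) :
    eval ![s * x₀, s * x₁, t * y₀, t * y₁] F = s ^ a * t ^ b * eval ![x₀, x₁, y₀, y₁] F := by
  simpa only [aeval_eq_eval] using hF.aeval_scale s t x₀ x₁ y₀ y₁

theorem natDegree_aeval_le [Nontrivial R] (hF : IsBihomogeneous F a b)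
    {f : Fin 4 → Polynomial R} {k d : ℕ} (h₀ : (f 0).natDegree ≤ k) (h₁ : (f 1).natDegree ≤ k)
    (h₂ : (f 2).natDegree ≤ d) (h₃ : (f 3).natDegree ≤ d) :
    (aeval f F).natDegree ≤ a * k + b * d := by
  rw [aeval_def, eval₂_eq']
  refine Polynomial.natDegree_sum_le_of_forall_le _ _ fun e he => ?_
  obtain ⟨rfl, rfl⟩ := hF.degrees_eq he
  refine (Polynomial.natDegree_C_mul_le _ _).trans ?_
  rw [Fin.prod_univ_four, add_mul, add_mul, ← add_assoc]
  have hpow {p : Polynomial R} {m : ℕ} (n : ℕ) (hp : p.natDegree ≤ m) :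
      (p ^ n).natDegree ≤ n * m :=
    Polynomial.natDegree_pow_le_of_le n hp
  exact Polynomial.natDegree_mul_le_of_le (Polynomial.natDegree_mul_le_of_le
    (Polynomial.natDegree_mul_le_of_le (hpow _ h₀) (hpow _ h₁)) (hpow _ h₂)) (hpow _ h₃)

theorem eq_zero_of_eval_chart {K : Type*} [Field K] [Infinite K] {F : MvPolynomial (Fin 4) K}
    (hF : IsBihomogeneous F a b) (h : ∀ c u, eval ![1, c, 1, u] F = 0) : F = 0 := by
  have hs (i : Fin 4) : (![{0}ᶜ, Set.univ, {0}ᶜ, Set.univ] i : Set K).Infinite := by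
    have h₀ : ({0}ᶜ : Set K).Infinite := (Set.finite_singleton 0).infinite_compl
    fin_cases i
    exacts [h₀, Set.infinite_univ, h₀, Set.infinite_univ]
  refine MvPolynomial.funext_set _ hs fun x hx => ?_
  have hx₀ : x 0 ≠ 0 := hx 0 trivial
  have hx₂ : x 2 ≠ 0 := hx 2 trivial
  have hx_eq : x = ![x 0 * 1, x 0 * (x 1 / x 0), x 2 * 1, x 2 * (x 3 / x 2)] := by
    ext i
    fin_cases i <;> simp [mul_div_cancel₀, hx₀, hx₂]
  rw [hx_eq, hF.eval_scale, h, mul_zero, map_zero]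

end IsBihomogeneous

/-! ### Ideals of points and restriction to curves -/

/-- The ideal of all polynomials vanishing at the point `p`, whose powers measure the multiplicity
of a polynomial at `p`. -/
def pointIdeal {R σ : Type*} [CommRing R] (p : σ → R) : Ideal (MvPolynomial σ R) :=
  RingHom.ker (eval p)

theorem mem_pointIdeal {R σ : Type*} [CommRing R] {p : σ → R} {F : MvPolynomial σ R} :
    F ∈ pointIdeal p ↔ eval p F = 0 :=
  Iff.rfl

theorem eval_bind₁ {R σ τ : Type*} [CommSemiring R] (f : σ → MvPolynomial τ R) (p : τ → R)
    (F : MvPolynomial σ R) : eval p (bind₁ f F) = eval (fun i => eval p (f i)) F :=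
  eval₂Hom_bind₁ _ _ _ _

theorem bind₁_mem_pointIdeal_pow {R σ τ : Type*} [CommRing R] {f : σ → MvPolynomial τ R}
    {p : τ → R} {F : MvPolynomial σ R} {k : ℕ} (hF : F ∈ pointIdeal (fun i => eval p (f i)) ^ k) :
    bind₁ f F ∈ pointIdeal p ^ k := by
  have hle : pointIdeal (fun i => eval p (f i)) ≤ (pointIdeal p).comap (bind₁ f) := by
    intro G hG
    rwa [Ideal.mem_comap, mem_pointIdeal, eval_bind₁]
  exact Ideal.le_comap_pow _ k (Ideal.pow_right_mono hle k hF)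

section onCurve

variable {K : Type*} [Field K]

/-- Restriction of a polynomial in `x₀, x₁, y₀, y₁` to the curve `x = (1, X)`, `y = (n, m)`, a
section of the first projection of `ℙ¹ × ℙ¹`. -/
def onCurve (n m : Polynomial K) : MvPolynomial (Fin 4) K →ₐ[K] Polynomial K :=
  aeval ![1, Polynomial.X, n, m]

variable {n m : Polynomial K} {F : MvPolynomial (Fin 4) K}

theorem eval_onCurve (c : K) :
    (onCurve n m F).eval c = eval ![1, c, n.eval c, m.eval c] F := by
  have halg : (Polynomial.aeval c).comp (onCurve n m) =
      aeval ![1, c, n.eval c, m.eval c] := by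
    ext i
    fin_cases i <;> simp [onCurve]
  simpa [aeval_eq_eval, Polynomial.coe_aeval_eq_eval] using DFunLike.congr_fun halg F

theorem pow_dvd_onCurve {c : K} {k : ℕ}
    (hF : F ∈ pointIdeal ![1, c, n.eval c, m.eval c] ^ k) :
    (Polynomial.X - Polynomial.C c) ^ k ∣ onCurve n m F := by
  have hle : pointIdeal ![1, c, n.eval c, m.eval c] ≤
      (Ideal.span {Polynomial.X - Polynomial.C c}).comap (onCurve n m) := by
    intro G hG
    rw [Ideal.mem_comap, Ideal.mem_span_singleton, Polynomial.dvd_iff_isRoot,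
      Polynomial.IsRoot.def, eval_onCurve]
    exact hG
  rw [← Ideal.mem_span_singleton, ← Ideal.span_singleton_pow]
  exact Ideal.le_comap_pow _ k (Ideal.pow_right_mono hle k hF)

theorem sub_dvd_onCurve_sub (n m m' : Polynomial K) (F : MvPolynomial (Fin 4) K) :
    m - m' ∣ onCurve n m F - onCurve n m' F := by
  let π := Ideal.Quotient.mkₐ K (Ideal.span {m - m'})
  have hπ : π m = π m' :=
    Ideal.Quotient.eq.2 (Ideal.mem_span_singleton_self _)
  have halg : π.comp (onCurve n m) = π.comp (onCurve n m') := by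
    ext i
    fin_cases i <;> simp [onCurve, hπ]
  rw [← Ideal.mem_span_singleton]
  exact Ideal.Quotient.eq.1 (DFunLike.congr_fun halg F)

namespace IsBihomogeneous

variable {a b : ℕ}

theorem onCurve_mul (hF : IsBihomogeneous F a b) (t n m : Polynomial K) :
    onCurve (t * n) (t * m) F = t ^ b * onCurve n m F := by
  simpa [onCurve] using hF.aeval_scale 1 t 1 Polynomial.X n m

theorem natDegree_onCurve_le (hF : IsBihomogeneous F a b) {d : ℕ} (hn : n.natDegree ≤ d)
    (hm : m.natDegree ≤ d) : (onCurve n m F).natDegree ≤ a + b * d := by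
  simpa [onCurve] using hF.natDegree_aeval_le (k := 1) (by simp) (by simp) hn hm

theorem pow_sub_dvd_onCurve (hF : IsBihomogeneous F a b) {c : K} {k : ℕ}
    (hk : F ∈ pointIdeal ![1, c, 0, 0] ^ k) (n m : Polynomial K) :
    (Polynomial.X - Polynomial.C c) ^ (k - b) ∣ onCurve n m F := by
  rcases le_total k b with hkb | hbk
  · simp [Nat.sub_eq_zero_of_le hkb]
  · set ℓ := Polynomial.X - Polynomial.C c with hℓ
    have hdvd : ℓ ^ k ∣ ℓ ^ b * onCurve n m F := by
      rw [← hF.onCurve_mul]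
      exact pow_dvd_onCurve (by simpa [hℓ] using hk)
    rw [← Nat.add_sub_cancel' hbk, pow_add] at hdvd
    exact (mul_dvd_mul_iff_left (pow_ne_zero _ (Polynomial.X_sub_C_ne_zero c))).1 hdvd

theorem eval_eq_zero_of_sections {ι : Type*} [Fintype ι] (hF : IsBihomogeneous F a b)
    (hb : b < Fintype.card ι) {n m : ι → Polynomial K} (h : ∀ i, onCurve (n i) (m i) F = 0)
    {c : K} (hn : ∀ i, (n i).eval c ≠ 0)
    (hinj : Function.Injective fun i => (m i).eval c / (n i).eval c) (u : K) :
    eval ![1, c, 1, u] F = 0 := by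
  let p : Polynomial K := aeval ![1, Polynomial.C c, 1, Polynomial.X] F
  have hp_eval (u : K) : p.eval u = eval ![1, c, 1, u] F := by
    have halg : (Polynomial.aeval u).comp (aeval ![1, Polynomial.C c, 1, Polynomial.X]) =
        aeval ![1, c, 1, u] := by
      ext i
      fin_cases i <;> simp
    simpa [aeval_eq_eval, Polynomial.coe_aeval_eq_eval] using DFunLike.congr_fun halg F
  have hp_deg : p.natDegree ≤ b := by
    simpa using hF.natDegree_aeval_le (k := 0) (d := 1) (f := ![1, Polynomial.C c, 1, Polynomial.X])
      (by simp) (by simp) (by simp) (by simp)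
  have hroot (i : ι) : p.eval ((m i).eval c / (n i).eval c) = 0 := by
    have hscale := hF.eval_scale 1 ((n i).eval c) 1 c 1 ((m i).eval c / (n i).eval c)
    rw [mul_one, one_mul, mul_one, mul_div_cancel₀ _ (hn i), ← eval_onCurve, h,
      Polynomial.eval_zero, one_pow, one_mul, zero_eq_mul] at hscale
    rw [hp_eval]
    exact hscale.resolve_left (pow_ne_zero _ (hn i))
  rw [← hp_eval, Polynomial.eq_zero_of_natDegree_lt_card_of_eval_eq_zero p hinj hroot
    (hp_deg.trans_lt hb), Polynomial.eval_zero]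

theorem eq_zero_of_sections [Infinite K] {ι : Type*} [Fintype ι] (hF : IsBihomogeneous F a b)
    (hb : b < Fintype.card ι) {n m : ι → Polynomial K} (h : ∀ i, onCurve (n i) (m i) F = 0)
    {c : K} (hn : ∀ i, (n i).eval c ≠ 0)
    (hinj : Function.Injective fun i => (m i).eval c / (n i).eval c) : F = 0 := by
  classical
  let W : Polynomial K := (∏ i, n i) *
    ∏ ij ∈ (Finset.univ : Finset ι).offDiag, (m ij.1 * n ij.2 - m ij.2 * n ij.1)
  have hW_iff (c : K) : W.eval c ≠ 0 ↔ (∀ i, (n i).eval c ≠ 0) ∧ ∀ i j, i ≠ j →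
      (m i).eval c * (n j).eval c ≠ (m j).eval c * (n i).eval c := by
    simp [W, Polynomial.eval_prod, Finset.prod_ne_zero_iff, sub_ne_zero]
  have hW : W ≠ 0 := by
    rintro hW
    refine (hW_iff c).2 ⟨hn, fun i j hij heq => hij (hinj ?_)⟩ (by rw [hW, Polynomial.eval_zero])
    exact (div_eq_div_iff (hn i) (hn j)).2 heq
  refine hF.eq_zero_of_eval_chart fun c u => ?_
  have hmul : W * onCurve 1 (Polynomial.C u) F = 0 := by
    refine Polynomial.funext fun c => ?_
    rw [Polynomial.eval_mul, Polynomial.eval_zero, mul_eq_zero, or_iff_not_imp_left]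
    intro hc
    obtain ⟨hn, hne⟩ := (hW_iff c).1 hc
    simpa [eval_onCurve] using hF.eval_eq_zero_of_sections hb h hn
      (fun i j hij => by_contra fun h => hne i j h ((div_eq_div_iff (hn i) (hn j)).1 hij)) u
  simpa [eval_onCurve] using
    congrArg (Polynomial.eval c) ((mul_eq_zero.1 hmul).resolve_left hW)

end IsBihomogeneous
end onCurve

/-! ### A special configuration -/

theorem isCoprime_linear {K : Type*} [Field K] {a b c d : K} (h : a * d - b * c ≠ 0) :
    IsCoprime (.C a * .X + .C b : Polynomial K) (.C c * .X + .C d) := by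
  have hC : Polynomial.C (a * d - b * c)⁻¹ *
      (Polynomial.C a * Polynomial.C d - Polynomial.C b * Polynomial.C c) = 1 := by
    rw [← map_mul, ← map_mul, ← map_sub, ← map_mul, inv_mul_cancel₀ h, map_one]
  exact ⟨-.C (a * d - b * c)⁻¹ * .C c, .C (a * d - b * c)⁻¹ * .C a, by linear_combination hC⟩

namespace SpecialPosition

/-- The values of `x₁ / x₀` on the four triple lines of the special configuration: the `q`-th one
joins `(1, α q, 0, 0)` and `(0, 0, 1, β q)`. -/
def α : Fin 4 → ℂ := ![0, 1, -1, 2]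

/-- The values of `y₁ / y₀` on the four triple lines. -/
def β : Fin 4 → ℂ := ![0, 2, -1, 1]

theorem β_eq_α_neg (q : Fin 4) : β q = α (-q) := by
  fin_cases q <;> rfl

theorem α_add_one (q : Fin 4) : α (q + 1) = 1 - β q := by
  fin_cases q <;> simp [α, β, show (1 : Fin 4) + 1 = 2 from rfl, show (2 : Fin 4) + 1 = 3 from rfl,
    show (3 : Fin 4) + 1 = 0 from rfl] <;> norm_num

theorem α_injective : Function.Injective α := by
  intro i j
  fin_cases i <;> fin_cases j <;> norm_num [α]

/-- The denominator of `y₁ / y₀`, as a function of `x₁ / x₀`, on the quadric through the lines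
`x = 0` and `y = 0` and the three triple lines other than the `q`-th one. -/
def den (q : Fin 4) : Polynomial ℂ :=
  .C (![5, 1, 3, 1] q) * .X + .C (![-1, 4, -2, -3] q)

/-- The numerator of `y₁ / y₀`, as a function of `x₁ / x₀`, on the quadric of `den q`. -/
def num (q : Fin 4) : Polynomial ℂ :=
  .C (![1, 3, 2, -4] q) * .X + .C (![7, 0, 0, 0] q)

theorem natDegree_den (q : Fin 4) : (den q).natDegree = 1 :=
  Polynomial.natDegree_linear (by fin_cases q <;> norm_num)

theorem natDegree_num_le (q : Fin 4) : (num q).natDegree ≤ 1 :=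
  Polynomial.natDegree_linear_le

theorem isCoprime_num_den (q : Fin 4) : IsCoprime (num q) (den q) :=
  isCoprime_linear (by fin_cases q <;> norm_num)

/-- The value of `x₁` at the point where the plane `y = (1, β j)` meets the curve
`y = (den q, num q)`. -/
def meet (q j : Fin 4) : ℂ :=
  if j = q then ![-7, 8, 2 / 5, 3 / 5] q else α j

/-- The polynomial whose roots are the values of `x₁ / x₀` where the quadric of `den q` meets the
quadric `x₀ y₁ = (x₀ - x₁) y₀` containing the simple lines. -/
def gap (q : Fin 4) : Polynomial ℂ :=
  num q - (1 - .X) * den q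

theorem num_sub_mul_den (q j : Fin 4) :
    num q - .C (β j) * den q =
      .C (![1, 3, 2, -4] q - β j * ![5, 1, 3, 1] q) * (.X - .C (meet q j)) := by
  have hconst : ![7, 0, 0, 0] q - β j * ![-1, 4, -2, -3] q =
      -(![1, 3, 2, -4] q - β j * ![5, 1, 3, 1] q) * meet q j := by
    fin_cases q <;> fin_cases j <;> norm_num [meet, α, β]
  have hC := congrArg (Polynomial.C : ℂ → Polynomial ℂ) hconst
  simp only [map_sub, map_mul, map_neg] at hC ⊢
  rw [num, den]
  linear_combination hC

theorem gap_eq (q j : Fin 4) :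
    gap q = (num q - .C (β j) * den q) + den q * (.X - .C (α (j + 1))) := by
  rw [gap, α_add_one, map_sub, Polynomial.C_1]
  ring

theorem isCoprime_gap_den (q : Fin 4) : IsCoprime (gap q) (den q) := by
  rw [gap, sub_eq_add_neg, ← neg_mul, IsCoprime.add_mul_right_left_iff]
  exact isCoprime_num_den q

theorem eval_gap_ne_zero (q j : Fin 4) : (gap q).eval (α j) ≠ 0 := by
  fin_cases q <;> fin_cases j <;> norm_num [gap, num, den, α]

theorem isCoprime_gap_X_sub_C (q j : Fin 4) : IsCoprime (gap q) (.X - .C (α j)) := by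
  rw [isCoprime_comm, (Polynomial.irreducible_X_sub_C _).coprime_iff_not_dvd,
    Polynomial.dvd_iff_isRoot]
  exact eval_gap_ne_zero q j

theorem natDegree_gap (q : Fin 4) : (gap q).natDegree = 2 := by
  have hexpand : gap q = .C (![5, 1, 3, 1] q) * .X ^ 2 +
      .C (![1, 3, 2, -4] q + ![-1, 4, -2, -3] q - ![5, 1, 3, 1] q) * .X +
      .C (![7, 0, 0, 0] q - ![-1, 4, -2, -3] q) := by
    simp only [gap, num, den, map_add, map_sub]
    ring
  rw [hexpand]
  exact Polynomial.natDegree_quadratic (by fin_cases q <;> norm_num)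

/-- Multiplicity at least three along the four triple lines of the special configuration. -/
def IsTriple (G : R3) : Prop :=
  ∀ q s t, G ∈ pointIdeal ![s, s * α q, t, t * β q] ^ 3

/-- The polynomial with simple roots at the values of `x₁ / x₀` on the triple lines other than the
`q`-th one. -/
def away (q : Fin 4) : Polynomial ℂ :=
  ∏ j ∈ Finset.univ.erase q, (.X - .C (α j))

theorem away_monic (q : Fin 4) : (away q).Monic :=
  Polynomial.monic_prod_of_monic _ _ fun j _ => Polynomial.monic_X_sub_C (α j)

theorem natDegree_away (q : Fin 4) : (away q).natDegree = 3 := by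
  rw [away, Polynomial.natDegree_finsetProd_X_sub_C_eq_card]
  simp

theorem isCoprime_X_sub_C_away (q : Fin 4) {c : ℂ} (hc : ∀ j ≠ q, c ≠ α j) :
    IsCoprime (.X - .C c) (away q) :=
  IsCoprime.prod_right fun j hj => Polynomial.isCoprime_X_sub_C_of_isUnit_sub
    (sub_ne_zero.2 (hc j (Finset.ne_of_mem_erase hj))).isUnit

theorem isCoprime_gap_away (q : Fin 4) : IsCoprime (gap q) (away q) :=
  IsCoprime.prod_right fun j _ => isCoprime_gap_X_sub_C q j

theorem eval_num {q j : Fin 4} (hj : j ≠ q) :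
    (num q).eval (α j) = (den q).eval (α j) * β j := by
  have heval : (num q - .C (β j) * den q).eval (α j) = 0 := by
    simp [num_sub_mul_den, meet, hj]
  rw [Polynomial.eval_sub, Polynomial.eval_mul, Polynomial.eval_C, sub_eq_zero] at heval
  rw [heval, mul_comm]

namespace IsTriple

variable {G : R3} {a b : ℕ} {n m : Polynomial ℂ}

theorem pow_three_dvd_onCurve (hG : IsTriple G) {q : Fin 4}
    (h : m.eval (α q) = n.eval (α q) * β q) :
    (.X - .C (α q)) ^ 3 ∣ onCurve n m G :=
  pow_dvd_onCurve (by simpa [h] using hG q 1 (n.eval (α q)))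

theorem pow_sub_dvd_onCurve (hG : IsTriple G) (hab : IsBihomogeneous G a b) (q : Fin 4)
    (n m : Polynomial ℂ) : (.X - .C (α q)) ^ (3 - b) ∣ onCurve n m G :=
  hab.pow_sub_dvd_onCurve (by simpa using hG q 1 0) n m

theorem away_pow_dvd_onCurve (hG : IsTriple G) (q : Fin 4) :
    away q ^ 3 ∣ onCurve (den q) (num q) G := by
  rw [away, ← Finset.prod_pow]
  refine Finset.prod_dvd_of_coprime (fun i _ j _ hij => ?_) fun j hj =>
    hG.pow_three_dvd_onCurve (eval_num (Finset.ne_of_mem_erase hj))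
  exact (Polynomial.pairwise_coprime_X_sub_C α_injective hij).pow

theorem mul_away_pow_dvd_onCurve (hG : IsTriple G) (hab : IsBihomogeneous G a b) (q : Fin 4) :
    (.X - .C (α q)) ^ (3 - b) * away q ^ 3 ∣ onCurve (den q) (num q) G :=
  (isCoprime_X_sub_C_away q fun _ hj => α_injective.ne hj.symm).pow.mul_dvd
    (hG.pow_sub_dvd_onCurve hab q _ _) (hG.away_pow_dvd_onCurve q)

end IsTriple

theorem natDegree_onCurve_quadric_le {G : R3} {a b : ℕ} (hab : IsBihomogeneous G a b)
    (q : Fin 4) : (onCurve (den q) (num q) G).natDegree ≤ a + b := by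
  simpa using hab.natDegree_onCurve_le (natDegree_den q).le (natDegree_num_le q)

theorem natDegree_mul_away_pow {p : Polynomial ℂ} (hp : p.Monic) (q : Fin 4) :
    (p * away q ^ 3).natDegree = p.natDegree + 9 := by
  rw [hp.natDegree_mul ((away_monic q).pow 3), (away_monic q).natDegree_pow, natDegree_away]

theorem gap_dvd_sub {G : R3} {a b : ℕ} (hab : IsBihomogeneous G a b) (q : Fin 4) :
    gap q ∣ onCurve (den q) (num q) G - den q ^ b * onCurve 1 (1 - .X) G := by
  rw [← hab.onCurve_mul, mul_one, mul_comm (den q) (1 - _)]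
  exact sub_dvd_onCurve_sub _ _ _ _

variable {G : R3} {a b : ℕ}

theorem onCurve_quadric_eq_zero_of_le_one (hG : IsTriple G) (hab : IsBihomogeneous G a b)
    (hdeg : a + b ≤ 10) (hb : b ≤ 1) (q : Fin 4) : onCurve (den q) (num q) G = 0 := by
  refine Polynomial.eq_zero_of_dvd_of_natDegree_lt (hG.mul_away_pow_dvd_onCurve hab q) ?_
  rw [natDegree_mul_away_pow ((Polynomial.monic_X_sub_C _).pow _),
    Polynomial.natDegree_pow, Polynomial.natDegree_X_sub_C]
  have := natDegree_onCurve_quadric_le hab q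
  omega

theorem onCurve_quadric_eq_zero_of_diagonal (hG : IsTriple G) (hab : IsBihomogeneous G a b)
    (hdeg : a + b ≤ 10) (hdiag : onCurve 1 (1 - .X) G = 0) (q : Fin 4) :
    onCurve (den q) (num q) G = 0 := by
  have hgap : gap q ∣ onCurve (den q) (num q) G := by
    simpa [hdiag] using gap_dvd_sub hab q
  refine Polynomial.eq_zero_of_dvd_of_natDegree_lt
    ((isCoprime_gap_away q).pow_right.mul_dvd hgap (hG.away_pow_dvd_onCurve q)) ?_
  rw [Polynomial.natDegree_mul, natDegree_gap, (away_monic q).natDegree_pow, natDegree_away]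
  · have := natDegree_onCurve_quadric_le hab q
    omega
  · exact Polynomial.ne_zero_of_natDegree_gt (n := 1) (by simp [natDegree_gap])
  · exact ((away_monic q).pow 3).ne_zero

-- Over `x = (1, 10)` the values of `(den q, num q)` are `(49, 17)`, `(14, 30)`, `(28, 20)` and
-- `(7, -40)`, so the four quadrics meet this fibre in distinct points.
theorem eq_zero_of_quadrics_and_sections (hab : IsBihomogeneous G a b)
    (hquad : ∀ q, onCurve (den q) (num q) G = 0) {k : ℕ} (hb : b < 4 + k)
    {m : Fin k → Polynomial ℂ} (hm : ∀ i, onCurve 1 (m i) G = 0)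
    (hinj : Function.Injective fun i => (m i).eval 10)
    (hne : ∀ q i, ![17, 30, 20, -40] q ≠ ![49, 14, 28, 7] q * (m i).eval 10) : G = 0 := by
  have hden (q : Fin 4) : (den q).eval 10 = ![49, 14, 28, 7] q := by
    fin_cases q <;> norm_num [den]
  have hnum (q : Fin 4) : (num q).eval 10 = ![17, 30, 20, -40] q := by
    fin_cases q <;> norm_num [num]
  have hden₀ (q : Fin 4) : (![49, 14, 28, 7] q : ℂ) ≠ 0 := by
    fin_cases q <;> norm_num
  have hquad_inj : Function.Injective fun q => (![17, 30, 20, -40] q / ![49, 14, 28, 7] q : ℂ) := by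
    intro i j
    fin_cases i <;> fin_cases j <;> norm_num
  refine hab.eq_zero_of_sections (ι := Fin 4 ⊕ Fin k) (n := Sum.elim den 1) (m := Sum.elim num m)
    (c := 10) (by simpa using hb) (by simpa using ⟨hquad, hm⟩) (by simpa [hden] using hden₀) ?_
  rintro (q | i) (r | j) h
  · exact congrArg Sum.inl (hquad_inj (by simpa [hden, hnum] using h))
  · exact (hne q j (by simpa [hden, hnum, div_eq_iff (hden₀ q), mul_comm] using h)).elim
  · exact (hne r i (by simpa [hden, hnum, eq_div_iff (hden₀ r), mul_comm, eq_comm] using h)).elim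
  · exact congrArg Sum.inr (hinj (by simpa using h))

theorem slope_ne_zero (q j : Fin 4) : (![1, 3, 2, -4] q - β j * ![5, 1, 3, 1] q : ℂ) ≠ 0 := by
  fin_cases q <;> fin_cases j <;> norm_num [β]

-- Modulo `gap q`, multiplication by `den q` moves the root `α (j + 1)` to `α j` for `j ≠ q`.
theorem exists_gap_dvd_den_pow_mul (q : Fin 4) : ∃ c : ℂ, c ≠ 0 ∧
    gap q ∣ den q ^ 3 * (.X - .C (α q)) + .C c * (.X - .C (α (q + 1))) := by
  let k (j : Fin 4) : ℂ := ![1, 3, 2, -4] q - β j * ![5, 1, 3, 1] q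
  have hstep {d e : Fin 4} (hd : d ≠ 0) (he : d + 1 = e) :
      gap q = .C (k (q + d)) * (.X - .C (α (q + d))) + den q * (.X - .C (α (q + e))) := by
    rw [gap_eq q (q + d), num_sub_mul_den, meet, if_neg (by simpa using hd), add_assoc, he]
  have h₁ := hstep (d := 1) (e := 2) (by decide) rfl
  have h₂ := hstep (d := 2) (e := 3) (by decide) rfl
  have h₃ := hstep (d := 3) (e := 0) (by decide) rfl
  rw [add_zero] at h₃
  refine ⟨k (q + 1) * k (q + 2) * k (q + 3), mul_ne_zero (mul_ne_zero (slope_ne_zero q _)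
    (slope_ne_zero q _)) (slope_ne_zero q _),
    den q ^ 2 - .C (k (q + 3)) * den q + .C (k (q + 3)) * .C (k (q + 2)), ?_⟩
  simp only [map_mul]
  linear_combination (-den q ^ 2) * h₃ + .C (k (q + 3)) * den q * h₂ -
    .C (k (q + 3)) * .C (k (q + 2)) * h₁

theorem eq_zero_of_gap_dvd {q : Fin 4} {κ μ : ℂ}
    (h : gap q ∣ den q ^ 5 * (.C κ * (.X - .C (α q))) + .C μ * (.X - .C (meet q q))) :
    κ = 0 ∧ μ = 0 := by
  obtain ⟨c, hc, p, hp⟩ := exists_gap_dvd_den_pow_mul q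
  set k : ℂ := ![1, 3, 2, -4] q - β q * ![5, 1, 3, 1] q with hk
  have hgap : gap q = .C k * (.X - .C (meet q q)) + den q * (.X - .C (α (q + 1))) := by
    rw [gap_eq q q, num_sub_mul_den]
  have hdvd : gap q ∣ den q * (.X - .C (α (q + 1))) * (.C (k * κ * c) * den q + .C μ) := by
    obtain ⟨r, hr⟩ := h
    refine ⟨.C k * .C κ * den q ^ 2 * p + .C μ - .C k * r, ?_⟩
    simp only [map_mul]
    linear_combination .C k * .C κ * den q ^ 2 * hp - .C k * hr - .C μ * hgap
  have hlin : Polynomial.C (k * κ * c) * den q + .C μ = 0 := by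
    refine Polynomial.eq_zero_of_dvd_of_natDegree_lt (((isCoprime_gap_den q).mul_right
      (isCoprime_gap_X_sub_C q _)).dvd_of_dvd_mul_left hdvd) ?_
    rw [Polynomial.natDegree_add_C, natDegree_gap]
    exact (Polynomial.natDegree_C_mul_le _ _).trans_lt (by simp [natDegree_den])
  have hκ_mul : k * κ * c * (den q).coeff 1 = 0 := by
    simpa only [Polynomial.coeff_add, Polynomial.coeff_C_mul, Polynomial.coeff_C_succ, add_zero,
      Polynomial.coeff_zero] using congrArg (Polynomial.coeff · 1) hlin
  have hden : (den q).coeff 1 ≠ 0 := by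
    rw [← natDegree_den q, Polynomial.coeff_natDegree, Polynomial.leadingCoeff_ne_zero]
    exact Polynomial.ne_zero_of_natDegree_gt (n := 0) (by simp [natDegree_den])
  have hκ : κ = 0 := by
    simpa [hc, hden, slope_ne_zero, hk] using hκ_mul
  exact ⟨hκ, by simpa [hκ] using hlin⟩

variable {A B : R3}

theorem onCurve_fibre_eq_zero (hA : IsTriple A) (hA' : IsBihomogeneous A 8 2) (hB : IsTriple B)
    (hB' : IsBihomogeneous B 3 7) (h : onCurve 1 (1 - .X) A + onCurve 1 (1 - .X) B = 0)
    (q : Fin 4) : onCurve 1 (.C (β q)) B = 0 := by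
  have hdiag : (Polynomial.X - Polynomial.C (α (q + 1))) ∣ onCurve 1 (1 - .X) B := by
    rw [← dvd_add_right (by simpa using hA.pow_sub_dvd_onCurve hA' (q + 1) 1 (1 - .X)), h]
    exact dvd_zero _
  have hfibre : (Polynomial.X - Polynomial.C (α (q + 1))) ∣ onCurve 1 (.C (β q)) B := by
    rw [Polynomial.dvd_iff_isRoot, Polynomial.IsRoot.def, eval_onCurve] at hdiag ⊢
    simpa [α_add_one] using hdiag
  have hcop : IsCoprime ((Polynomial.X - Polynomial.C (α q)) ^ 3)
      (Polynomial.X - Polynomial.C (α (q + 1))) :=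
    (Polynomial.pairwise_coprime_X_sub_C α_injective (by simp)).pow_left
  refine Polynomial.eq_zero_of_dvd_of_natDegree_lt
    (hcop.mul_dvd (hB.pow_three_dvd_onCurve (by simp)) hfibre) ?_
  have hdeg : (onCurve 1 (.C (β q)) B).natDegree ≤ 3 := by
    simpa using hB'.natDegree_onCurve_le (d := 0) (n := 1) (m := .C (β q)) (by simp) (by simp)
  rw [Polynomial.natDegree_mul (pow_ne_zero _ (Polynomial.X_sub_C_ne_zero _))
    (Polynomial.X_sub_C_ne_zero _), Polynomial.natDegree_pow, Polynomial.natDegree_X_sub_C,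
    Polynomial.natDegree_X_sub_C]
  omega

theorem exists_onCurve_quadric_eq_of_two (hA : IsTriple A) (hA' : IsBihomogeneous A 8 2)
    (q : Fin 4) : ∃ κ : ℂ, onCurve (den q) (num q) A = .C κ * ((.X - .C (α q)) * away q ^ 3) := by
  refine ⟨_, Polynomial.eq_leadingCoeff_mul_of_monic_of_dvd_of_natDegree_le
    ((Polynomial.monic_X_sub_C _).mul ((away_monic q).pow 3))
    (by simpa using hA.mul_away_pow_dvd_onCurve hA' q) ?_⟩
  rw [natDegree_mul_away_pow (Polynomial.monic_X_sub_C _), Polynomial.natDegree_X_sub_C]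
  exact natDegree_onCurve_quadric_le hA' q

theorem exists_onCurve_quadric_eq_of_seven (hB : IsTriple B) (hB' : IsBihomogeneous B 3 7)
    {q : Fin 4} (hfibre : onCurve 1 (.C (β q)) B = 0) :
    ∃ μ : ℂ, onCurve (den q) (num q) B = .C μ * ((.X - .C (meet q q)) * away q ^ 3) := by
  have hmeet : (Polynomial.X - Polynomial.C (meet q q)) ∣ onCurve (den q) (num q) B := by
    have hzero : onCurve (den q) (.C (β q) * den q) B = 0 := by
      rw [mul_comm, ← mul_one (den q), mul_assoc, one_mul, hB'.onCurve_mul, hfibre, mul_zero]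
    have hsub := sub_dvd_onCurve_sub (den q) (num q) (.C (β q) * den q) B
    rw [hzero, sub_zero, num_sub_mul_den] at hsub
    exact (dvd_mul_left _ _).trans hsub
  have hne (j : Fin 4) (_ : j ≠ q) : meet q q ≠ α j := by
    fin_cases q <;> fin_cases j <;> norm_num [meet, α]
  refine ⟨_, Polynomial.eq_leadingCoeff_mul_of_monic_of_dvd_of_natDegree_le
    ((Polynomial.monic_X_sub_C _).mul ((away_monic q).pow 3))
    ((isCoprime_X_sub_C_away q hne).pow_right.mul_dvd hmeet (hB.away_pow_dvd_onCurve q)) ?_⟩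
  rw [natDegree_mul_away_pow (Polynomial.monic_X_sub_C _), Polynomial.natDegree_X_sub_C]
  exact natDegree_onCurve_quadric_le hB' q

theorem onCurve_quadric_eq_zero_of_two_seven (hA : IsTriple A) (hA' : IsBihomogeneous A 8 2)
    (hB : IsTriple B) (hB' : IsBihomogeneous B 3 7)
    (h : onCurve 1 (1 - .X) A + onCurve 1 (1 - .X) B = 0) (q : Fin 4) :
    onCurve (den q) (num q) A = 0 ∧ onCurve (den q) (num q) B = 0 := by
  obtain ⟨κ, hκ⟩ := exists_onCurve_quadric_eq_of_two hA hA' q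
  obtain ⟨μ, hμ⟩ := exists_onCurve_quadric_eq_of_seven hB hB'
    (onCurve_fibre_eq_zero hA hA' hB hB' h q)
  have hgap : gap q ∣ den q ^ 5 * onCurve (den q) (num q) A + onCurve (den q) (num q) B := by
    convert ((gap_dvd_sub hA' q).mul_left (den q ^ 5)).add (gap_dvd_sub hB' q) using 1
    linear_combination den q ^ 7 * h
  have hcancel : gap q ∣
      den q ^ 5 * (.C κ * (.X - .C (α q))) + .C μ * (.X - .C (meet q q)) := by
    refine (isCoprime_gap_away q).pow_right.dvd_of_dvd_mul_right (z := away q ^ 3) ?_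
    convert hgap using 1
    rw [hκ, hμ]
    ring
  obtain ⟨rfl, rfl⟩ := eq_zero_of_gap_dvd hcancel
  simp [hκ, hμ]

theorem eq_zero_of_two_seven (hA : IsTriple A) (hA' : IsBihomogeneous A 8 2)
    (hB : IsTriple B) (hB' : IsBihomogeneous B 3 7)
    (h : onCurve 1 (1 - .X) A + onCurve 1 (1 - .X) B = 0) : A = 0 ∧ B = 0 := by
  have hquad := onCurve_quadric_eq_zero_of_two_seven hA hA' hB hB' h
  constructor
  · exact eq_zero_of_quadrics_and_sections hA' (fun q => (hquad q).1) (k := 0) (m := ![])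
      (by norm_num) (by simp) (Function.injective_of_subsingleton _) (by simp)
  · refine eq_zero_of_quadrics_and_sections hB' (fun q => (hquad q).2) (k := 4) (by norm_num)
      (onCurve_fibre_eq_zero hA hA' hB hB' h) ?_ ?_
    · intro i j
      fin_cases i <;> fin_cases j <;> norm_num [β]
    · intro q i
      fin_cases q <;> fin_cases i <;> norm_num [β]

end SpecialPosition

/-- The interchange of `x₀, x₁` with `y₀, y₁`. -/
def exchange {R : Type*} [CommSemiring R] :
    MvPolynomial (Fin 4) R →ₐ[R] MvPolynomial (Fin 4) R :=
  bind₁ ![X 2, X 3, X 0, X 1]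

theorem exchange_exchange {R : Type*} [CommSemiring R] (F : MvPolynomial (Fin 4) R) :
    exchange (exchange F) = F := by
  have halg : (exchange (R := R)).comp exchange = AlgHom.id R _ := by
    ext i : 1
    fin_cases i <;> simp [exchange]
  exact DFunLike.congr_fun halg F

theorem exchange_injective {R : Type*} [CommSemiring R] :
    Function.Injective (exchange (R := R)) :=
  Function.Involutive.injective exchange_exchange

theorem IsBihomogeneous.exchange {R : Type*} [CommRing R] {F : MvPolynomial (Fin 4) R} {a b : ℕ}
    (hF : IsBihomogeneous F a b) : IsBihomogeneous (exchange F) b a := by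
  have hswap : IsWeightedHomogeneous ![(0, 1), (0, 1), (1, 0), (1, 0)] F (b, a) := by
    intro e he
    obtain ⟨rfl, rfl⟩ := hF.degrees_eq (mem_support_iff.2 he)
    simp [Finsupp.weight_apply, Finsupp.sum_fintype, Fin.sum_univ_four, -nsmul_eq_mul,
      Prod.smul_mk]
  refine bind₁_isWeightedHomogeneous hswap fun i => ?_
  fin_cases i <;> exact isWeightedHomogeneous_X R biweight _

namespace SpecialPosition

variable {G : R3}

theorem IsTriple.exchange (hG : IsTriple G) : IsTriple (exchange G) := by
  intro q s t
  refine bind₁_mem_pointIdeal_pow ?_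
  convert hG (-q) t s using 3
  ext i
  fin_cases i <;> simp [β_eq_α_neg]

theorem onCurve_diagonal_exchange (G : R3) :
    onCurve 1 (1 - .X) (exchange G) = (onCurve 1 (1 - .X) G).comp (1 - .X) := by
  have halg : (onCurve 1 (1 - .X)).comp exchange =
      (Polynomial.aeval (1 - Polynomial.X)).comp (onCurve (K := ℂ) 1 (1 - .X)) := by
    ext i : 1
    fin_cases i <;> simp [onCurve, exchange]
  exact DFunLike.congr_fun halg G

theorem eq_zero_of_le_one {a b : ℕ} (hG : IsTriple G) (hab : IsBihomogeneous G a b)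
    (hdeg : a + b ≤ 10) (hb : b ≤ 1) : G = 0 :=
  eq_zero_of_quadrics_and_sections hab (onCurve_quadric_eq_zero_of_le_one hG hab hdeg hb) (k := 0)
    (m := ![]) (by omega) (by simp) (Function.injective_of_subsingleton _) (by simp)

theorem eq_zero_of_le_four {a b : ℕ} (hG : IsTriple G) (hab : IsBihomogeneous G a b)
    (hdeg : a + b ≤ 10) (hb : b ≤ 4) (hdiag : onCurve 1 (1 - .X) G = 0) : G = 0 :=
  eq_zero_of_quadrics_and_sections hab (onCurve_quadric_eq_zero_of_diagonal hG hab hdeg hdiag)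
    (k := 1) (m := ![1 - .X]) (by omega) (by simpa using hdiag)
    (Function.injective_of_subsingleton _) fun q i => by fin_cases q <;> fin_cases i <;> norm_num

-- The six roots of the restriction to `y = (1, 4)`: the intersections with the four quadrics, with
-- the quadric of the simple lines, and the point `(1, 0, 1, 4)` itself.
theorem onCurve_four_eq_zero (hG : IsTriple G) (hab : IsBihomogeneous G 5 5)
    (hdiag : onCurve 1 (1 - .X) G = 0) (hz : eval ![1, 0, 1, 4] G = 0) :
    onCurve 1 (.C 4) G = 0 := by
  have hquad := onCurve_quadric_eq_zero_of_diagonal hG hab le_rfl hdiag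
  have hroot_quad (q : Fin 4) {c : ℂ} (hc : (num q).eval c = (den q).eval c * 4)
      (hc₀ : (den q).eval c ≠ 0) : eval ![1, c, 1, 4] G = 0 := by
    have hscale := hab.eval_scale 1 ((den q).eval c) 1 c 1 4
    rw [mul_one, one_mul, mul_one, ← hc, ← eval_onCurve, hquad, Polynomial.eval_zero, one_pow,
      one_mul, zero_eq_mul] at hscale
    exact hscale.resolve_left (pow_ne_zero _ hc₀)
  have hmeet (q : Fin 4) : eval ![1, ![11 / 19, -16, 4 / 5, 3 / 2] q, 1, 4] G = 0 :=
    hroot_quad q (by fin_cases q <;> norm_num [num, den]) (by fin_cases q <;> norm_num [den])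
  have hsimple : eval ![1, -3, 1, 4] G = 0 := by
    have heval := eval_onCurve (n := 1) (m := 1 - .X) (F := G) (-3)
    have hthree : (1 - .X : Polynomial ℂ).eval (-3) = 4 := by norm_num
    rwa [hdiag, Polynomial.eval_zero, Polynomial.eval_one, hthree, eq_comm] at heval
  let root : Fin 6 → ℂ := ![11 / 19, -16, 4 / 5, 3 / 2, -3, 0]
  have hroot (i : Fin 6) : eval ![1, root i, 1, 4] G = 0 := by
    fin_cases i
    exacts [hmeet 0, hmeet 1, hmeet 2, hmeet 3, hsimple, hz]
  refine Polynomial.eq_zero_of_natDegree_lt_card_of_eval_eq_zero _ (f := root) ?_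
    (fun i => by simpa [eval_onCurve] using hroot i) ?_
  · intro i j
    fin_cases i <;> fin_cases j <;> norm_num [root]
  · have hle : (onCurve 1 (.C 4) G).natDegree ≤ 5 := by
      simpa using hab.natDegree_onCurve_le (d := 0) (n := 1) (m := .C 4) (by simp) (by simp)
    simpa using hle.trans_lt (by norm_num)

theorem eq_zero_of_five_five (hG : IsTriple G) (hab : IsBihomogeneous G 5 5)
    (hdiag : onCurve 1 (1 - .X) G = 0) (hz : eval ![1, 0, 1, 4] G = 0) : G = 0 := by
  refine eq_zero_of_quadrics_and_sections hab
    (onCurve_quadric_eq_zero_of_diagonal hG hab le_rfl hdiag) (k := 2) (m := ![1 - .X, .C 4])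
    (by norm_num) ?_ ?_ ?_
  · intro i
    fin_cases i
    exacts [hdiag, onCurve_four_eq_zero hG hab hdiag hz]
  · intro i j
    fin_cases i <;> fin_cases j <;> norm_num
  · intro q i
    fin_cases q <;> fin_cases i <;> norm_num

/-- The properties of the bihomogeneous components, indexed by their degree in `y₀, y₁`, of a form
of degree ten with the prescribed multiplicities. The five simple lines lie on the quadric
`x₀ y₁ = (x₀ - x₁) y₀` and are permuted by fifth roots of unity, so they only see the sums of
components over residue classes modulo five. -/
structure IsSpecialFamily (G : ℕ → R3) : Prop where
  isBihomogeneous : ∀ b ≤ 10, IsBihomogeneous (G b) (10 - b) b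
  isTriple : ∀ b ≤ 10, IsTriple (G b)
  sum_onCurve_eq_zero : ∀ r < 5,
    ∑ b ∈ Finset.range 11 with b % 5 = r, onCurve 1 (1 - .X) (G b) = 0

namespace IsSpecialFamily

variable {G : ℕ → R3}

theorem reflect (hG : IsSpecialFamily G) : IsSpecialFamily fun b => exchange (G (10 - b)) where
  isBihomogeneous b hb := by
    simpa [Nat.sub_sub_self hb] using (hG.isBihomogeneous (10 - b) (Nat.sub_le _ _)).exchange
  isTriple b _ := (hG.isTriple (10 - b) (Nat.sub_le _ _)).exchange
  sum_onCurve_eq_zero r hr := by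
    have hreindex : ∑ b ∈ Finset.range 11 with b % 5 = r,
        onCurve 1 (1 - .X) (exchange (G (10 - b))) =
          (∑ b ∈ Finset.range 11 with b % 5 = (5 - r) % 5, onCurve 1 (1 - .X) (G b)).comp
            (1 - .X) := by
      rw [Polynomial.sum_comp]
      refine Finset.sum_nbij' (10 - ·) (10 - ·) ?_ ?_ ?_ ?_
        fun b _ => onCurve_diagonal_exchange _
      all_goals
        intro b hb
        simp only [Finset.mem_filter, Finset.mem_range] at hb ⊢
        omega
    rw [hreindex, hG.sum_onCurve_eq_zero _ (Nat.mod_lt _ (by norm_num)), Polynomial.zero_comp]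

theorem eq_zero_of_le_one (hG : IsSpecialFamily G) {b : ℕ} (hb : b ≤ 1) : G b = 0 :=
  SpecialPosition.eq_zero_of_le_one (hG.isTriple b (by omega)) (hG.isBihomogeneous b (by omega))
    (by omega) hb

theorem four_eq_zero (hG : IsSpecialFamily G) (h₉ : G 9 = 0) : G 4 = 0 := by
  refine eq_zero_of_le_four (hG.isTriple 4 (by norm_num)) (hG.isBihomogeneous 4 (by norm_num))
    (by norm_num) le_rfl ?_
  simpa [Finset.sum_filter, Finset.sum_range_succ, h₉] using
    hG.sum_onCurve_eq_zero 4 (by norm_num)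

theorem two_and_seven_eq_zero (hG : IsSpecialFamily G) : G 2 = 0 ∧ G 7 = 0 := by
  refine eq_zero_of_two_seven (hG.isTriple 2 (by norm_num)) (hG.isBihomogeneous 2 (by norm_num))
    (hG.isTriple 7 (by norm_num)) (hG.isBihomogeneous 7 (by norm_num)) ?_
  simpa [Finset.sum_filter, Finset.sum_range_succ] using hG.sum_onCurve_eq_zero 2 (by norm_num)

theorem eq_zero (hG : IsSpecialFamily G)
    (hz : ∑ b ∈ Finset.range 11, eval ![1, 0, 1, 4] (G b) = 0) {b : ℕ} (hb : b ≤ 10) : G b = 0 := by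
  have hreflect (b : ℕ) (h : exchange (G (10 - b)) = 0) : G (10 - b) = 0 :=
    exchange_injective (h.trans (map_zero _).symm)
  have h₀ : G 0 = 0 := hG.eq_zero_of_le_one zero_le_one
  have h₁ : G 1 = 0 := hG.eq_zero_of_le_one le_rfl
  have h₉ : G 9 = 0 := hreflect 1 (hG.reflect.eq_zero_of_le_one (b := 1) le_rfl)
  have h₁₀ : G 10 = 0 := hreflect 0 (hG.reflect.eq_zero_of_le_one (b := 0) zero_le_one)
  have h₄ : G 4 = 0 := hG.four_eq_zero h₉
  have h₆ : G 6 = 0 := hreflect 4 (hG.reflect.four_eq_zero (by simp [h₁]))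
  obtain ⟨h₂, h₇⟩ := hG.two_and_seven_eq_zero
  have h₃ : G 3 = 0 := hreflect 7 hG.reflect.two_and_seven_eq_zero.2
  have h₈ : G 8 = 0 := hreflect 2 hG.reflect.two_and_seven_eq_zero.1
  have h₅ : G 5 = 0 := by
    refine eq_zero_of_five_five (hG.isTriple 5 (by norm_num)) (hG.isBihomogeneous 5 (by norm_num))
      ?_ (by simpa [Finset.sum_range_succ, h₀, h₁, h₂, h₃, h₄, h₆, h₇, h₈, h₉, h₁₀] using hz)
    simpa [Finset.sum_filter, Finset.sum_range_succ, h₀, h₁₀] using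
      hG.sum_onCurve_eq_zero 0 (by norm_num)
  interval_cases b <;> assumption

end IsSpecialFamily
end SpecialPosition

theorem mem_of_forall_sum_pow_smul_mem {K M : Type*} [Field K] [Infinite K] [AddCommGroup M]
    [Module K M] (W : Submodule K M) {n : ℕ} {f : ℕ → M}
    (h : ∀ t : K, ∑ b ∈ Finset.range n, t ^ b • f b ∈ W) {b : ℕ} (hb : b < n) : f b ∈ W := by
  rw [← Submodule.Quotient.mk_eq_zero W, ← Module.forall_dual_apply_eq_zero_iff K]
  intro φ
  let p : Polynomial K := ∑ b ∈ Finset.range n, Polynomial.monomial b (φ (W.mkQ (f b)))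
  have hp : p = 0 := by
    refine Polynomial.funext fun t => ?_
    have ht := congrArg φ ((Submodule.Quotient.mk_eq_zero W).2 (h t))
    rw [← W.mkQ_apply] at ht
    simpa [p, Polynomial.eval_finsetSum, mul_comm] using ht
  simpa [p, Polynomial.finsetSum_coeff, Polynomial.coeff_monomial, hb] using
    congrArg (Polynomial.coeff · b) hp

/-- The component of bidegree `(d - b, b)` of a form of degree `d`. -/
def bicomponent {R : Type*} [CommSemiring R] (d b : ℕ) (F : MvPolynomial (Fin 4) R) :
    MvPolynomial (Fin 4) R :=
  weightedHomogeneousComponent biweight (d - b, b) F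

theorem isBihomogeneous_bicomponent {R : Type*} [CommSemiring R] (d b : ℕ)
    (F : MvPolynomial (Fin 4) R) : IsBihomogeneous (bicomponent d b F) (d - b) b :=
  weightedHomogeneousComponent_isWeightedHomogeneous _ _

theorem sum_bicomponent {R : Type*} [CommSemiring R] {d : ℕ} {F : MvPolynomial (Fin 4) R}
    (hF : F.IsHomogeneous d) : ∑ b ∈ Finset.range (d + 1), bicomponent d b F = F := by
  classical
  ext e
  simp only [coeff_sum, bicomponent, coeff_weightedHomogeneousComponent, weight_biweight,
    Prod.mk.injEq]
  rcases eq_or_ne (coeff e F) 0 with he | he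
  · simp [he]
  · have hdeg : e 0 + e 1 + (e 2 + e 3) = d := by
      rw [← hF he, Finsupp.weight_apply, Finsupp.sum_fintype _ _ (by simp), Fin.sum_univ_four]
      simp [add_assoc]
    rw [Finset.sum_eq_single (e 2 + e 3) (fun b _ hb => if_neg fun h => hb h.2.symm)
      (fun h => (h (Finset.mem_range.2 (by omega))).elim), if_pos ⟨by omega, rfl⟩]

theorem IsBihomogeneous.bind₁_scale {R : Type*} [CommRing R] {F : MvPolynomial (Fin 4) R} {a b : ℕ}
    (hF : IsBihomogeneous F a b) (t : R) :
    bind₁ ![X 0, X 1, C t * X 2, C t * X 3] F = t ^ b • F := by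
  have hX : (![X 0, X 1, X 2, X 3] : Fin 4 → MvPolynomial (Fin 4) R) = X := by
    ext1 i
    fin_cases i <;> rfl
  have hscale := hF.aeval_scale 1 (C t) (X 0) (X 1) (X 2) (X (3 : Fin 4))
  rw [hX, aeval_X_left_apply, one_mul, one_mul, one_pow, one_mul, ← map_pow] at hscale
  rw [smul_eq_C_mul, ← hscale, bind₁]

namespace SpecialPosition

theorem IsTriple.bicomponent {F : R3} {d : ℕ} (hF : F.IsHomogeneous d) (h : IsTriple F) {b : ℕ}
    (hb : b ≤ d) : IsTriple (bicomponent d b F) := by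
  intro q s t
  refine mem_of_forall_sum_pow_smul_mem
    ((pointIdeal ![s, s * α q, t, t * β q] ^ 3).restrictScalars ℂ) (n := d + 1)
    (f := fun b => _root_.bicomponent d b F) (fun c => ?_) (Nat.lt_succ_of_le hb)
  have hscale : bind₁ ![X 0, X 1, C c * X 2, C c * X 3] F =
      ∑ b ∈ Finset.range (d + 1), c ^ b • _root_.bicomponent d b F := by
    conv_lhs => rw [← sum_bicomponent hF, map_sum]
    exact Finset.sum_congr rfl fun b _ => (isBihomogeneous_bicomponent d b F).bind₁_scale c
  rw [← hscale]
  refine bind₁_mem_pointIdeal_pow ?_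
  convert h q s (c * t) using 3
  ext i
  fin_cases i <;> simp [mul_assoc]

theorem sum_onCurve_eq_zero_of_simple {G : ℕ → R3} {n : ℕ} {a : ℕ → ℕ}
    (hG : ∀ b < n, IsBihomogeneous (G b) (a b) b) {k : ℕ} {ζ : ℂ} (hζ : IsPrimitiveRoot ζ k)
    (h : ∀ l < k, ∀ c, ∑ b ∈ Finset.range n, eval ![1, c, ζ ^ l, ζ ^ l * (1 - c)] (G b) = 0)
    {r : ℕ} (hr : r < k) :
    ∑ b ∈ Finset.range n with b % k = r, onCurve 1 (1 - .X) (G b) = 0 := by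
  let v (r : ℕ) : Polynomial ℂ := ∑ b ∈ Finset.range n with b % k = r, onCurve 1 (1 - .X) (G b)
  let ω (l : Fin k) : Polynomial ℂ := .C (ζ ^ l.1)
  have hω : Function.Injective ω := fun i j hij =>
    Fin.ext (hζ.pow_inj i.2 j.2 (Polynomial.C_injective hij))
  refine congrFun (Matrix.eq_zero_of_forall_index_sum_mul_pow_eq_zero hω (v := fun r => v r)
    fun l => ?_) ⟨r, hr⟩
  have hω_pow : ω l ^ k = 1 := by
    rw [← map_pow, ← pow_mul, mul_comm, pow_mul, hζ.pow_eq_one, one_pow, Polynomial.C_1]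
  calc ∑ i : Fin k, v i * ω l ^ (i : ℕ)
      = ∑ i ∈ Finset.range k, ∑ b ∈ Finset.range n with b % k = i,
          ω l ^ b * onCurve 1 (1 - .X) (G b) := by
        rw [Finset.sum_range]
        refine Finset.sum_congr rfl fun i _ => ?_
        rw [Finset.sum_mul]
        refine Finset.sum_congr rfl fun b hb => ?_
        rw [pow_eq_pow_mod b hω_pow, (Finset.mem_filter.1 hb).2, mul_comm]
    _ = ∑ b ∈ Finset.range n, onCurve (ω l) (ω l * (1 - .X)) (G b) := by
        rw [Finset.sum_fiberwise_of_maps_to fun b _ => Finset.mem_range.2 (Nat.mod_lt b l.pos)]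
        refine Finset.sum_congr rfl fun b hb => ?_
        rw [← (hG b (Finset.mem_range.1 hb)).onCurve_mul, mul_one]
    _ = 0 := Polynomial.funext fun c => by
        simpa [Polynomial.eval_finsetSum, eval_onCurve, ω] using h l l.2 c

theorem eq_zero_of_isTriple {F : R3} (hF : F.IsHomogeneous 10) (htriple : IsTriple F) {ζ : ℂ}
    (hζ : IsPrimitiveRoot ζ 5)
    (hsimple : ∀ l < 5, ∀ c, eval ![1, c, ζ ^ l, ζ ^ l * (1 - c)] F = 0)
    (hz : eval ![1, 0, 1, 4] F = 0) : F = 0 := by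
  have heval (p : C4) : ∑ b ∈ Finset.range 11, eval p (bicomponent 10 b F) = eval p F := by
    rw [← map_sum, sum_bicomponent hF]
  have hfamily : IsSpecialFamily fun b => bicomponent 10 b F :=
    { isBihomogeneous := fun b _ => isBihomogeneous_bicomponent 10 b F
      isTriple := fun b hb => htriple.bicomponent hF hb
      sum_onCurve_eq_zero := fun r hr => sum_onCurve_eq_zero_of_simple
        (fun b _ => isBihomogeneous_bicomponent 10 b F) hζ
        (fun l hl c => by rw [heval, hsimple l hl]) hr }
  rw [← sum_bicomponent hF]
  exact Finset.sum_eq_zero fun b hb =>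
    hfamily.eq_zero (by rw [heval, hz]) (Finset.mem_range_succ_iff.1 hb)

end SpecialPosition

/-! ### Openness -/

theorem span_range_eq_top_of_dotProduct {K ι κ : Type*} [Field K] [Fintype κ] {w : ι → κ → K}
    (h : ∀ c, (∀ i, w i ⬝ᵥ c = 0) → c = 0) : Submodule.span K (Set.range w) = ⊤ := by
  classical
  by_contra hne
  obtain ⟨φ, hφ, hle⟩ := Submodule.exists_le_ker_of_lt_top _ (lt_top_iff_ne_top.2 hne)
  obtain ⟨c, rfl⟩ := (dotProductEquiv K κ).surjective φ
  refine hφ ((map_eq_zero_iff _ (dotProductEquiv K κ).injective).2 (h c fun i => ?_))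
  rw [dotProduct_comm]
  exact hle (Submodule.subset_span ⟨i, rfl⟩)

theorem exists_submatrix_det_ne_zero {K ι κ : Type*} [Field K] [Fintype κ] [DecidableEq κ]
    {A : Matrix ι κ K} (hA : ∀ c, A.mulVec c = 0 → c = 0) :
    ∃ f : κ → ι, (A.submatrix f id).det ≠ 0 := by
  have hspan : Submodule.span K (Set.range A.row) = ⊤ :=
    span_range_eq_top_of_dotProduct fun c hc => hA c (funext hc)
  obtain ⟨r, hr, -, hli⟩ := Submodule.exists_fun_fin_finrank_span_eq K (Set.range A.row)
  choose f hf using hr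
  let e : κ ≃ Fin (Module.finrank K (Submodule.span K (Set.range A.row))) :=
    Fintype.equivOfCardEq (by
      rw [hspan, finrank_top, Module.finrank_fintype_fun_eq_card, Fintype.card_fin])
  refine ⟨f ∘ e, IsUnit.ne_zero ?_⟩
  rw [← Matrix.isUnit_iff_isUnit_det, ← Matrix.linearIndependent_rows_iff_isUnit]
  have hrow : (A.submatrix (f ∘ e) id).row = r ∘ e := funext fun i => hf (e i)
  rw [hrow]
  exact hli.comp e e.injective

/-- The condition `Q` holds at all points where some nonzero polynomial does not vanish. -/
def IsGeneric {K τ : Type*} [Field K] (Q : (τ → K) → Prop) : Prop :=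
  ∃ P : MvPolynomial τ K, P ≠ 0 ∧ ∀ v, eval v P ≠ 0 → Q v

namespace IsGeneric

variable {K τ : Type*} [Field K] {Q Q' : (τ → K) → Prop}

theorem mono (hQ : IsGeneric Q) (h : ∀ v, Q v → Q' v) : IsGeneric Q' := by
  obtain ⟨P, hP, hPQ⟩ := hQ
  exact ⟨P, hP, fun v hv => h v (hPQ v hv)⟩

theorem forall_finset {ι : Type*} {Q : ι → (τ → K) → Prop} (s : Finset ι)
    (h : ∀ i ∈ s, IsGeneric (Q i)) : IsGeneric fun v => ∀ i ∈ s, Q i v := by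
  choose! P hP hPQ using h
  refine ⟨∏ i ∈ s, P i, Finset.prod_ne_zero_iff.2 hP, fun v hv i hi => hPQ i hi v ?_⟩
  rw [map_prod] at hv
  exact Finset.prod_ne_zero_iff.1 hv i hi

theorem and (hQ : IsGeneric Q) (hQ' : IsGeneric Q') : IsGeneric fun v => Q v ∧ Q' v := by
  obtain ⟨P, hP, hPQ⟩ := hQ
  obtain ⟨P', hP', hPQ'⟩ := hQ'
  refine ⟨P * P', mul_ne_zero hP hP', fun v hv => ?_⟩
  rw [map_mul, mul_ne_zero_iff] at hv
  exact ⟨hPQ v hv.1, hPQ' v hv.2⟩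

theorem eval_ne_zero {P : MvPolynomial τ K} {v₀ : τ → K} (h : eval v₀ P ≠ 0) :
    IsGeneric fun v => eval v P ≠ 0 :=
  ⟨P, fun h₀ => h (by rw [h₀, map_zero]), fun _ => id⟩

theorem mulVec_injective {ι κ : Type*} [Fintype κ] (A : Matrix ι κ (MvPolynomial τ K))
    {v₀ : τ → K} (h : ∀ c, (A.map (eval v₀)).mulVec c = 0 → c = 0) :
    IsGeneric fun v => ∀ c, (A.map (eval v)).mulVec c = 0 → c = 0 := by
  classical
  obtain ⟨f, hf⟩ := exists_submatrix_det_ne_zero h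
  have heval (v : τ → K) :
      eval v (A.submatrix f id).det = ((A.map (eval v)).submatrix f id).det :=
    RingHom.map_det _ _
  refine (eval_ne_zero (P := (A.submatrix f id).det) (by rwa [heval])).mono fun v hv c hc => ?_
  rw [heval] at hv
  exact Matrix.eq_zero_of_mulVec_eq_zero hv (funext fun i => congrFun hc (f i))

end IsGeneric

/-- The polynomial `F (X + p)`, whose coefficients are the Taylor coefficients of `F` at `p`. -/
def taylorShift {R σ : Type*} [CommRing R] (p : σ → R) : MvPolynomial σ R →ₐ[R] MvPolynomial σ R :=
  bind₁ fun i => X i + C (p i)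

section taylorShift

variable {R σ : Type*} [CommRing R]

theorem taylorShift_neg_taylorShift (p : σ → R) (F : MvPolynomial σ R) :
    taylorShift (-p) (taylorShift p F) = F := by
  have halg : (taylorShift (-p)).comp (taylorShift p) = AlgHom.id R _ := by
    ext i : 1
    simp [taylorShift]
  exact DFunLike.congr_fun halg F

theorem pointIdeal_zero : pointIdeal (0 : σ → R) = idealOfVars σ R := by
  ext F
  rw [mem_pointIdeal, eval_zero, ← pow_one (idealOfVars σ R), mem_pow_idealOfVars_iff']
  simp [Finsupp.degree_eq_zero_iff, constantCoeff_eq]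

theorem mem_pointIdeal_pow_iff {p : σ → R} {F : MvPolynomial σ R} {k : ℕ} :
    F ∈ pointIdeal p ^ k ↔ ∀ e, Finsupp.degree e < k → coeff e (taylorShift p F) = 0 := by
  rw [← mem_pow_idealOfVars_iff', ← pointIdeal_zero]
  constructor
  · intro hF
    refine bind₁_mem_pointIdeal_pow ?_
    simpa using hF
  · intro hF
    rw [← taylorShift_neg_taylorShift p F]
    refine bind₁_mem_pointIdeal_pow ?_
    convert hF using 3
    simp [Pi.zero_def]

theorem map_taylorShift {S : Type*} [CommRing S] (φ : R →+* S) (p : σ → R) (F : MvPolynomial σ R) :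
    map φ (taylorShift p F) = taylorShift (φ ∘ p) (map φ F) := by
  simp [taylorShift, map_bind₁]

end taylorShift

/-- Forms of degree `d` vanishing at `z`, and with multiplicity `m i` along the line spanned by
`v i 0` and `v i 1` for every `i`, are zero. -/
def Separates {K : Type*} [Field K] {s : ℕ} (d : ℕ) (m : Fin s → ℕ) (z : Fin 4 → K)
    (v : Fin s → Fin 2 → Fin 4 → K) : Prop :=
  ∀ F : MvPolynomial (Fin 4) K, F.IsHomogeneous d →
    (∀ i (a b : K), F ∈ pointIdeal (a • v i 0 + b • v i 1) ^ m i) → eval z F = 0 → F = 0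

theorem mem_finsuppAntidiag_univ {σ : Type*} [Fintype σ] [DecidableEq σ] {d : ℕ} {e : σ →₀ ℕ} :
    e ∈ Finset.univ.finsuppAntidiag d ↔ Finsupp.degree e = d := by
  simp [Finset.mem_finsuppAntidiag, Finsupp.degree_eq_sum]

theorem sum_map_monomial_mul_coeff {R σ : Type*} [CommSemiring R] [Fintype σ] [DecidableEq σ]
    {d : ℕ} {F : MvPolynomial σ R} (hF : F.IsHomogeneous d) (φ : MvPolynomial σ R →ₗ[R] R) :
    ∑ e : Finset.univ.finsuppAntidiag d, φ (monomial e 1) * coeff e.1 F = φ F := by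
  have hsupp : F.support ⊆ Finset.univ.finsuppAntidiag d := fun e he =>
    mem_finsuppAntidiag_univ.2 (not_imp_comm.1 hF.coeff_eq_zero (mem_support_iff.1 he))
  have hterm (e : σ →₀ ℕ) : φ (monomial e (coeff e F)) = φ (monomial e 1) * coeff e F := by
    rw [mul_comm, ← smul_eq_mul, ← map_smul, smul_monomial, smul_eq_mul, mul_one]
  rw [Finset.sum_coe_sort _ fun e => φ (monomial e 1) * coeff e F]
  conv_rhs => rw [F.as_sum, map_sum, Finset.sum_congr rfl fun e _ => hterm e]
  refine (Finset.sum_subset hsupp fun e _ he => ?_).symm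
  rw [notMem_support_iff.1 he, mul_zero]

theorem exists_isHomogeneous_coeff_eq {R σ : Type*} [CommSemiring R] [Fintype σ] [DecidableEq σ]
    {d : ℕ} (c : Finset.univ.finsuppAntidiag d → R) :
    ∃ F : MvPolynomial σ R, F.IsHomogeneous d ∧ ∀ e, coeff e.1 F = c e := by
  refine ⟨∑ e, monomial e.1 (c e), .sum _ _ _ fun e _ => isHomogeneous_monomial _ ?_, fun e => ?_⟩
  · exact mem_finsuppAntidiag_univ.1 e.2
  · simp [coeff_sum, coeff_monomial]

section Separates

variable {K : Type*} [Field K] {s d : ℕ} {m : Fin s → ℕ} {z : Fin 4 → K}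

/-- The matrix of the linear conditions imposed on the coefficients of a form of degree `d` by
vanishing at `z` and multiplicity `m i` at the points of the `i`-th line, as a function of the
spanning vectors of the lines. -/
def conditionMatrix (d : ℕ) (m : Fin s → ℕ) (z : Fin 4 → K) :
    Matrix ((Σ i : Fin s, K × K × {e : Fin 4 →₀ ℕ // Finsupp.degree e < m i}) ⊕ Unit)
      (Finset.univ.finsuppAntidiag d : Finset (Fin 4 →₀ ℕ))
      (MvPolynomial (Fin s × Fin 2 × Fin 4) K) :=
  .of fun r e => r.elim
    (fun r => coeff r.2.2.2.1
      (taylorShift (fun k => C r.2.1 * X (r.1, 0, k) + C r.2.2.1 * X (r.1, 1, k)) (monomial e.1 1)))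
    (fun _ => C (eval z (monomial e.1 1)))

theorem conditionMatrix_mulVec_eq_zero_iff (v : Fin s × Fin 2 × Fin 4 → K)
    {F : MvPolynomial (Fin 4) K} (hF : F.IsHomogeneous d) :
    ((conditionMatrix d m z).map (eval v)).mulVec (fun e => coeff e.1 F) = 0 ↔
      (∀ i (a b : K),
        F ∈ pointIdeal (a • (fun k => v (i, 0, k)) + b • fun k => v (i, 1, k)) ^ m i) ∧
        eval z F = 0 := by
  have hline (i : Fin s) (a b : K) (e' : {e : Fin 4 →₀ ℕ // Finsupp.degree e < m i}) :
      ((conditionMatrix d m z).map (eval v)).mulVec (fun e => coeff e.1 F) (.inl ⟨i, a, b, e'⟩) =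
        coeff e'.1 (taylorShift (a • (fun k => v (i, 0, k)) + b • fun k => v (i, 1, k)) F) := by
    refine .trans ?_ (sum_map_monomial_mul_coeff hF (lcoeff K e'.1 ∘ₗ (taylorShift _).toLinearMap))
    refine Finset.sum_congr rfl fun e _ => congrArg (· * _) ?_
    simp only [Matrix.map_apply, conditionMatrix, Matrix.of_apply, Sum.elim_inl, ← coeff_map,
      map_taylorShift]
    simp [Function.comp_def, Pi.add_def]
  have hpoint : ((conditionMatrix d m z).map (eval v)).mulVec (fun e => coeff e.1 F) (.inr ()) =
      eval z F := by
    rw [← coe_aeval_eq_eval]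
    refine .trans ?_ (sum_map_monomial_mul_coeff hF (aeval z).toLinearMap)
    refine Finset.sum_congr rfl fun e _ => congrArg (· * _) ?_
    simp [conditionMatrix, coe_aeval_eq_eval]
  simp only [_root_.funext_iff, Sum.forall, Sigma.forall, Prod.forall, hline, hpoint,
    Subtype.forall, mem_pointIdeal_pow_iff, Pi.zero_apply, forall_const]

theorem Separates.isGeneric {v₀ : Fin s → Fin 2 → Fin 4 → K} (h : Separates d m z v₀) :
    IsGeneric fun v : Fin s × Fin 2 × Fin 4 → K => Separates d m z fun i j k => v (i, j, k) := by
  have hiff (v : Fin s × Fin 2 × Fin 4 → K) : (Separates d m z fun i j k => v (i, j, k)) ↔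
      ∀ c, ((conditionMatrix d m z).map (eval v)).mulVec c = 0 → c = 0 := by
    refine ⟨fun hv c hc => ?_, fun hv F hF hline hz => ?_⟩
    · obtain ⟨F, hF, hFc⟩ := exists_isHomogeneous_coeff_eq c
      obtain rfl : (fun e => coeff e.1 F) = c := funext hFc
      obtain ⟨hline, hz⟩ := (conditionMatrix_mulVec_eq_zero_iff v hF).1 hc
      simp only [hv F hF hline hz, coeff_zero]
      rfl
    · have hc := hv _ ((conditionMatrix_mulVec_eq_zero_iff v hF).2 ⟨hline, hz⟩)
      refine MvPolynomial.ext _ _ fun e => ?_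
      by_contra he
      exact he (congrFun hc ⟨e, mem_finsuppAntidiag_univ.2 (not_imp_comm.1 hF.coeff_eq_zero he)⟩)
  simp only [hiff]
  exact IsGeneric.mulVec_injective _ ((hiff fun p => v₀ p.1 p.2.1 p.2.2).1 h)

end Separates

theorem lineIdeal_le_pointIdeal {L : Submodule ℂ C4} {p : C4} (hp : p ∈ L) :
    lineIdeal L ≤ pointIdeal p :=
  fun _ hF => hF p hp

theorem Separates.finrank_linSys_eq_one {s d : ℕ} {m : Fin s → ℕ} {z : C4}
    {v : Fin s → Fin 2 → C4} (h : Separates d m z v)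
    (hne : linSys d (fun i => Submodule.span ℂ {v i 0, v i 1}) m ≠ ⊥) :
    Module.finrank ℂ (linSys d (fun i => Submodule.span ℂ {v i 0, v i 1}) m) = 1 := by
  let φ := (aeval z : R3 →ₐ[ℂ] ℂ).toLinearMap.domRestrict
    (linSys d (fun i => Submodule.span ℂ {v i 0, v i 1}) m)
  have hφ : Function.Injective φ := by
    refine (injective_iff_map_eq_zero φ).2 fun F hF => Subtype.ext ?_
    refine h F.1 F.2.1 (fun i a b => ?_) (by simpa [φ, coe_aeval_eq_eval] using hF)
    have hp : a • v i 0 + b • v i 1 ∈ Submodule.span ℂ {v i 0, v i 1} :=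
      Submodule.mem_span_pair.2 ⟨a, b, rfl⟩
    exact Ideal.pow_right_mono (lineIdeal_le_pointIdeal hp) _ ((Submodule.mem_iInf _).1 F.2.2 i)
  have := Module.Finite.of_injective φ hφ
  refine le_antisymm ?_ (Submodule.one_le_finrank_iff.2 hne)
  simpa using LinearMap.finrank_le_finrank_of_injective hφ

namespace SpecialPosition

/-- The spanning vectors of the lines of the special configuration. -/
def spanningVectors (ζ : ℂ) : Fin 9 → Fin 2 → C4 :=
  Fin.append (fun q : Fin 4 => ![![1, α q, 0, 0], ![0, 0, 1, β q]])
    (fun l : Fin 5 => ![![1, 0, ζ ^ l.1, ζ ^ l.1], ![0, 1, 0, -ζ ^ l.1]])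

theorem separates {ζ : ℂ} (hζ : IsPrimitiveRoot ζ 5) :
    Separates 10 ![3, 3, 3, 3, 1, 1, 1, 1, 1] ![1, 0, 1, 4] (spanningVectors ζ) := by
  intro F hF hline hz
  refine eq_zero_of_isTriple hF (fun q s t => ?_) hζ (fun l hl c => ?_) hz
  · have hq := hline (Fin.castAdd 5 q) s t
    simp only [spanningVectors, Fin.append_left] at hq
    fin_cases q <;> simpa using hq
  · have hl' := hline (Fin.natAdd 4 ⟨l, hl⟩) 1 c
    simp only [spanningVectors, Fin.append_right] at hl'
    interval_cases l <;> simpa [mem_pointIdeal, mul_sub, ← sub_eq_add_neg, mul_comm c] using hl'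

end SpecialPosition

/-! ### Linear substitutions -/

section toMvPolynomial

variable {R σ τ υ : Type*} [CommRing R] [Fintype τ] [Fintype υ]

theorem bind₁_toMvPolynomial_mul (M : Matrix σ τ R) (N : Matrix τ υ R) (F : MvPolynomial σ R) :
    bind₁ (M * N).toMvPolynomial F = bind₁ N.toMvPolynomial (bind₁ M.toMvPolynomial F) := by
  rw [bind₁_bind₁]
  congr 2
  exact funext fun i => Matrix.toMvPolynomial_mul M N i

theorem eval_bind₁_toMvPolynomial (M : Matrix σ τ R) (v : τ → R) (F : MvPolynomial σ R) :
    eval v (bind₁ M.toMvPolynomial F) = eval (M.mulVec v) F := by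
  rw [eval_bind₁]
  simp only [Matrix.toMvPolynomial_eval_eq_apply]

theorem isHomogeneous_bind₁_toMvPolynomial {F : MvPolynomial σ R} {d : ℕ} (hF : F.IsHomogeneous d)
    (M : Matrix σ τ R) : (bind₁ M.toMvPolynomial F).IsHomogeneous d := by
  simpa using hF.aeval _ M.toMvPolynomial_isHomogeneous

variable [Fintype σ] [DecidableEq σ]

theorem bind₁_toMvPolynomial_inv_cancel {M : Matrix σ σ R} (hM : IsUnit M.det)
    (F : MvPolynomial σ R) :
    bind₁ M⁻¹.toMvPolynomial (bind₁ M.toMvPolynomial F) = F := by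
  rw [← bind₁_toMvPolynomial_mul, Matrix.mul_nonsing_inv M hM, Matrix.toMvPolynomial_one,
    bind₁_X_left, AlgHom.id_apply]

end toMvPolynomial

theorem bind₁_toMvPolynomial_mem_lineIdeal_pow {L L' : Submodule ℂ C4}
    {M : Matrix (Fin 4) (Fin 4) ℂ} (hM : L ≤ L'.comap M.mulVecLin) {F : R3} {k : ℕ}
    (hF : F ∈ lineIdeal L' ^ k) :
    bind₁ M.toMvPolynomial F ∈ lineIdeal L ^ k := by
  have hle : lineIdeal L' ≤ (lineIdeal L).comap (bind₁ M.toMvPolynomial) := by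
    intro G hG v hv
    rw [eval_bind₁_toMvPolynomial]
    exact hG _ (hM hv)
  exact Ideal.le_comap_pow _ k (Ideal.pow_right_mono hle k hF)

theorem mem_pow_of_forall_coeff_eq_zero {R σ : Type*} [CommSemiring R]
    {I : Ideal (MvPolynomial σ R)} {s : Finset σ} (hs : ∀ i ∈ s, X i ∈ I) {k : ℕ}
    {F : MvPolynomial σ R} (hF : ∀ e, ∑ i ∈ s, e i < k → coeff e F = 0) : F ∈ I ^ k := by
  rw [F.as_sum]
  refine Ideal.sum_mem _ fun e he => ?_
  have hk : k ≤ ∑ i ∈ s, e i := not_lt.1 fun h => mem_support_iff.1 he (hF e h)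
  have hdvd : ∏ i ∈ s, (X i : MvPolynomial σ R) ^ e i ∣ monomial e (coeff e F) := by
    classical
    rw [monomial_eq, ← Finset.prod_subset (Finset.inter_subset_left (s₂ := e.support))]
    · exact (Finset.prod_dvd_prod_of_subset _ _ _ Finset.inter_subset_right).mul_left _
    · intro i hi hie
      rw [Finsupp.notMem_support_iff.1 fun h => hie (Finset.mem_inter.2 ⟨hi, h⟩), pow_zero]
  refine Ideal.pow_le_pow_right hk (Ideal.mem_of_dvd _ hdvd ?_)
  rw [← Finset.prod_pow_eq_pow_sum]
  exact Ideal.prod_mem_prod fun i hi => Ideal.pow_mem_pow (hs i hi) _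

/-! ### Forms with prescribed multiplicities along lines in normal position -/

theorem exists_mem_ne_zero_forall_apply_eq_zero {K M κ : Type*} [Field K] [AddCommGroup M]
    [Module K M] [Fintype κ] {V : Submodule K M} (hV : Fintype.card κ < Module.finrank K V)
    (ψ : κ → M →ₗ[K] K) : ∃ F ∈ V, F ≠ 0 ∧ ∀ k, ψ k F = 0 := by
  have : Module.Finite K V := Module.finite_of_finrank_pos (Nat.zero_lt_of_lt hV)
  have hker : LinearMap.ker ((LinearMap.pi ψ).domRestrict V) ≠ ⊥ :=
    LinearMap.ker_ne_bot_of_finrank_lt (by rwa [Module.finrank_fintype_fun_eq_card])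
  obtain ⟨F, hF, hF₀⟩ := (Submodule.ne_bot_iff _).1 hker
  exact ⟨F, F.2, Subtype.coe_ne_coe.2 hF₀, fun k => congrFun (LinearMap.mem_ker.1 hF) k⟩

theorem weight_mem_of_mem_support_bind₁ {R σ τ M : Type*} [CommSemiring R] [AddCommMonoid M]
    {w : σ → M} {w' : τ → M} {f : σ → MvPolynomial τ R}
    (hf : ∀ i, IsWeightedHomogeneous w' (f i) (w i)) {F : MvPolynomial σ R} {s : Set M}
    (hF : ∀ e ∈ F.support, Finsupp.weight w e ∈ s) {e : τ →₀ ℕ} (he : e ∈ (bind₁ f F).support) :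
    Finsupp.weight w' e ∈ s := by
  rw [F.as_sum, map_sum, mem_support_iff, coeff_sum] at he
  obtain ⟨e', he', hne⟩ := Finset.exists_ne_zero_of_sum_ne_zero he
  rw [bind₁_isWeightedHomogeneous (isWeightedHomogeneous_monomial w e' _ rfl) hf hne]
  exact hF e' he'

/-- The bidegrees `(10 - b, b)` with `2 ≤ b ≤ 8`. Forms of these bidegrees are the forms of
degree ten with multiplicity at least two along the lines `x = 0` and `y = 0`. -/
def centralBidegrees : Set (ℕ × ℕ) :=
  {p | p.1 + p.2 = 10 ∧ 2 ≤ p.1 ∧ 2 ≤ p.2}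

/-- The forms all of whose bidegrees are central. -/
def centralForms : Submodule ℂ R3 :=
  restrictSupport ℂ {e | Finsupp.weight biweight e ∈ centralBidegrees}

theorem mem_centralForms {F : R3} :
    F ∈ centralForms ↔ ∀ e ∈ F.support, Finsupp.weight biweight e ∈ centralBidegrees :=
  Iff.rfl

/-- The exponent of bidegree `(8 - b, b + 2)` with the given exponents of `x₁` and `y₁`. -/
def exponent (b i j : ℕ) : Fin 4 →₀ ℕ :=
  Finsupp.equivFunOnFinite.symm ![8 - b - i, i, b + 2 - j, j]

theorem eq_exponent {e : Fin 4 →₀ ℕ} (he : Finsupp.weight biweight e ∈ centralBidegrees) :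
    e = exponent (e 2 + e 3 - 2) (e 1) (e 3) ∧ e 2 + e 3 - 2 < 7 := by
  obtain ⟨hsum, hx, hy⟩ := he
  simp only [weight_biweight] at hsum hx hy
  refine ⟨?_, by omega⟩
  ext i
  fin_cases i <;> simp [exponent] <;> omega

theorem isHomogeneous_of_mem_centralForms {F : R3} (hF : F ∈ centralForms) :
    F.IsHomogeneous 10 := by
  intro e he
  rw [← (mem_centralForms.1 hF e (mem_support_iff.2 he)).1, weight_biweight,
    Finsupp.weight_apply, Finsupp.sum_fintype _ _ (by simp), Fin.sum_univ_four]
  simp [add_assoc]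

theorem finrank_centralForms : Module.finrank ℂ centralForms = 224 := by
  let f (t : Σ b : Fin 7, Fin (9 - b) × Fin (b + 3)) : Fin 4 →₀ ℕ := exponent t.1 t.2.1 t.2.2
  have hf : Function.Injective f := by
    rintro ⟨b, i, j⟩ ⟨b', i', j'⟩ h
    have hi : (i : ℕ) = i' := DFunLike.congr_fun h 1
    have hj : (j : ℕ) = j' := DFunLike.congr_fun h 3
    have hb : (b + 2 - j : ℕ) = b' + 2 - j' := DFunLike.congr_fun h 2
    obtain rfl : b = b' := by omega
    simp [Fin.ext_iff, hi, hj]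
  have hrange : Set.range f = {e | Finsupp.weight biweight e ∈ centralBidegrees} := by
    refine Set.Subset.antisymm ?_ fun e he => ?_
    · rintro _ ⟨⟨b, i, j⟩, rfl⟩
      have hweight : Finsupp.weight biweight (f ⟨b, i, j⟩) = (8 - (b : ℕ), (b : ℕ) + 2) := by
        rw [weight_biweight]
        refine Prod.ext (Nat.sub_add_cancel (Nat.le_of_lt_succ ?_))
          (Nat.sub_add_cancel (Nat.le_of_lt_succ j.2))
        omega
      rw [Set.mem_ofPred_eq, hweight]
      refine ⟨?_, ?_, ?_⟩ <;> dsimp <;> omega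
    · obtain ⟨hfe, hb⟩ := eq_exponent he
      obtain ⟨hsum, hx, hy⟩ := he
      simp only [weight_biweight] at hsum hx hy
      exact ⟨⟨⟨e 2 + e 3 - 2, hb⟩, ⟨e 1, by dsimp; omega⟩, ⟨e 3, by dsimp; omega⟩⟩, hfe.symm⟩
  rw [centralForms, Module.finrank_eq_nat_card_basis (basisRestrictSupport ℂ _), ← hrange,
    Nat.card_range_of_injective hf, Nat.card_eq_fintype_card]
  rfl

/-- The line spanned by `(a, 0)` and `(0, b)`, which meets both lines `x = 0` and `y = 0`. -/
def normalLine (a b : Fin 2 → ℂ) : Submodule ℂ C4 :=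
  Submodule.span ℂ {![a 0, a 1, 0, 0], ![0, 0, b 0, b 1]}

/-- The linear substitution acting by `g` on `x₀, x₁` and by `h` on `y₀, y₁`. -/
def blockFrame (g h : Matrix (Fin 2) (Fin 2) ℂ) : Matrix (Fin 4) (Fin 4) ℂ :=
  !![g 0 0, g 0 1, 0, 0; g 1 0, g 1 1, 0, 0; 0, 0, h 0 0, h 0 1; 0, 0, h 1 0, h 1 1]

theorem det_blockFrame (g h : Matrix (Fin 2) (Fin 2) ℂ) :
    (blockFrame g h).det = g.det * h.det := by
  simp [blockFrame, Matrix.det_succ_row_zero, Fin.sum_univ_succ, Fin.succAbove]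
  ring

theorem bind₁_blockFrame_mem_centralForms {F : R3} (hF : F ∈ centralForms)
    (g h : Matrix (Fin 2) (Fin 2) ℂ) :
    bind₁ (blockFrame g h).toMvPolynomial F ∈ centralForms := by
  have hblock (i j) (hij : blockFrame g h i j ≠ 0) : biweight j = biweight i := by
    fin_cases i <;> fin_cases j <;> simp_all [blockFrame, biweight]
  refine mem_centralForms.2 fun e he => weight_mem_of_mem_support_bind₁ (fun i => ?_)
    (mem_centralForms.1 hF) he
  refine (weightedHomogeneousSubmodule ℂ biweight (biweight i)).sum_mem fun j _ => ?_
  by_cases hij : blockFrame g h i j = 0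
  · simp [hij]
  · exact isWeightedHomogeneous_monomial _ _ _ (by simp [Finsupp.weight_single, hblock i j hij])

theorem map_blockFrame_normalLine (g h : Matrix (Fin 2) (Fin 2) ℂ) :
    (normalLine ![1, 0] ![1, 0]).map (blockFrame g h).mulVecLin =
      normalLine (g.col 0) (h.col 0) := by
  simp only [normalLine, blockFrame, Submodule.map_span, Set.image_pair, Matrix.mulVecLin_apply]
  congr 1
  refine congrArg₂ (fun v w : C4 => ({v, w} : Set C4)) ?_ ?_ <;> ext i <;> fin_cases i <;>
    simp [Matrix.mulVec, Fin.sum_univ_four, dotProduct]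

theorem map_mulVecLin_le_comap_inv {n K : Type*} [Fintype n] [DecidableEq n] [CommRing K]
    {M : Matrix n n K} (hM : IsUnit M.det) (L : Submodule K (n → K)) :
    L.map M.mulVecLin ≤ L.comap M⁻¹.mulVecLin := by
  rw [Submodule.map_le_iff_le_comap]
  intro v hv
  simpa [Matrix.mulVec_mulVec, Matrix.nonsing_inv_mul M hM] using hv

theorem mem_lineIdeal_normalLine_pow {F : R3} (hF : F ∈ centralForms)
    {g h : Matrix (Fin 2) (Fin 2) ℂ} (hg : g.det = 1) (hh : h.det = 1)
    (hcoeff : ∀ b < 7, ∀ i j, i + j < 3 →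
      coeff (exponent b i j) (bind₁ (blockFrame g h).toMvPolynomial F) = 0) :
    F ∈ lineIdeal (normalLine (g.col 0) (h.col 0)) ^ 3 := by
  have hdet : IsUnit (blockFrame g h).det := by simp [det_blockFrame, hg, hh]
  have hline : normalLine (g.col 0) (h.col 0) ≤
      (normalLine ![1, 0] ![1, 0]).comap (blockFrame g h)⁻¹.mulVecLin := by
    rw [← map_blockFrame_normalLine]
    exact map_mulVecLin_le_comap_inv hdet _
  rw [← bind₁_toMvPolynomial_inv_cancel hdet F]
  refine bind₁_toMvPolynomial_mem_lineIdeal_pow hline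
    (mem_pow_of_forall_coeff_eq_zero (s := {1, 3}) (fun i hi v hv => ?_) fun e he => ?_)
  · obtain ⟨s, t, rfl⟩ := Submodule.mem_span_pair.1 hv
    fin_cases hi <;> simp
  · by_contra hne
    obtain ⟨hexp, hb⟩ := eq_exponent
      (mem_centralForms.1 (bind₁_blockFrame_mem_centralForms hF g h) e (mem_support_iff.2 hne))
    rw [hexp] at hne
    exact hne (hcoeff _ hb _ _ (by simpa using he))

theorem mem_lineIdeal_span_pair {F : R3} {d : ℕ} (hF : F.IsHomogeneous d) {u : Fin 2 → C4}
    (hcoeff : ∀ k ≤ d, coeff (Finsupp.equivFunOnFinite.symm ![d - k, k])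
      (bind₁ (Matrix.of u).transpose.toMvPolynomial F) = 0) :
    F ∈ lineIdeal (Submodule.span ℂ {u 0, u 1}) := by
  have hzero : bind₁ (Matrix.of u).transpose.toMvPolynomial F = 0 := by
    refine MvPolynomial.ext _ _ fun e => ?_
    by_contra hne
    have hdegree : e 0 + e 1 = d := by
      simpa [Finsupp.weight_apply, Finsupp.sum_fintype, Fin.sum_univ_two] using
        isHomogeneous_bind₁_toMvPolynomial hF (Matrix.of u).transpose hne
    have he : e = Finsupp.equivFunOnFinite.symm ![d - e 1, e 1] := by
      ext i
      fin_cases i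
      · simp [← hdegree]
      · simp
    rw [he] at hne
    exact hne (hcoeff _ (by omega))
  intro v hv
  obtain ⟨s, t, rfl⟩ := Submodule.mem_span_pair.1 hv
  have hmulVec : (Matrix.of u).transpose.mulVec ![s, t] = s • u 0 + t • u 1 := by
    ext i
    simp [Matrix.mulVec, dotProduct, mul_comm]
  rw [← hmulVec, ← eval_bind₁_toMvPolynomial, hzero, map_zero]

theorem exists_det_eq_one_col_eq {a : Fin 2 → ℂ} (ha : a ≠ 0) :
    ∃ g : Matrix (Fin 2) (Fin 2) ℂ, g.det = 1 ∧ g.col 0 = a := by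
  have hcoprime : IsCoprime (a 0) (a 1) := by
    rw [Semifield.isCoprime_iff]
    by_contra! h
    exact ha (funext (Fin.forall_fin_two.2 h))
  obtain ⟨g, h₀, h₁⟩ := hcoprime.exists_SL2_col 0
  exact ⟨g, g.2, funext (Fin.forall_fin_two.2 ⟨h₀, h₁⟩)⟩

theorem exists_form_of_normalLine {a b : Fin 4 → Fin 2 → ℂ} (ha : ∀ q, a q ≠ 0)
    (hb : ∀ q, b q ≠ 0) (u : Fin 5 → Fin 2 → C4) :
    ∃ F : R3, F ≠ 0 ∧ F.IsHomogeneous 10 ∧ (∀ q, F ∈ lineIdeal (normalLine (a q) (b q)) ^ 3) ∧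
      ∀ l, F ∈ lineIdeal (Submodule.span ℂ {u l 0, u l 1}) := by
  choose g hg hga using fun q => exists_det_eq_one_col_eq (ha q)
  choose h hh hhb using fun q => exists_det_eq_one_col_eq (hb q)
  have hcard : Fintype.card {p : Fin 3 × Fin 3 // p.1.1 + p.2.1 < 3} = 6 := by decide
  let ψ : (Fin 4 × Fin 7 × {p : Fin 3 × Fin 3 // p.1.1 + p.2.1 < 3}) ⊕ (Fin 5 × Fin 11) →
      R3 →ₗ[ℂ] ℂ := Sum.elim
    (fun k => lcoeff ℂ (exponent k.2.1 k.2.2.1.1 k.2.2.1.2) ∘ₗ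
      (bind₁ (blockFrame (g k.1) (h k.1)).toMvPolynomial).toLinearMap)
    (fun k => lcoeff ℂ (Finsupp.equivFunOnFinite.symm ![10 - k.2, k.2]) ∘ₗ
      (bind₁ (Matrix.of (u k.1)).transpose.toMvPolynomial).toLinearMap)
  obtain ⟨F, hF, hF₀, hψ⟩ := exists_mem_ne_zero_forall_apply_eq_zero (V := centralForms)
    (by simp [finrank_centralForms, hcard]) ψ
  refine ⟨F, hF₀, isHomogeneous_of_mem_centralForms hF, fun q => ?_, fun l => ?_⟩
  · rw [← hga, ← hhb]
    exact mem_lineIdeal_normalLine_pow hF (hg q) (hh q) fun b hb i j hij =>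
      hψ (.inl (q, ⟨b, hb⟩, ⟨(⟨i, by omega⟩, ⟨j, by omega⟩), hij⟩))
  · exact mem_lineIdeal_span_pair (isHomogeneous_of_mem_centralForms hF) fun k hk =>
      hψ (.inr (l, ⟨k, by omega⟩))

/-! ### Common transversals of four lines -/

theorem separable_of_discr_ne_zero {K : Type*} [Field K] {f : Polynomial K} (hf : 0 < f.degree)
    (hdiscr : f.discr ≠ 0) : f.Separable := by
  have hpos : 0 < f.natDegree := Polynomial.natDegree_pos_iff_degree_pos.2 hf
  obtain ⟨p, q, -, -, hpq⟩ := Polynomial.exists_mul_add_mul_eq_C_resultant f f.derivative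
    (m := f.natDegree) le_rfl (Polynomial.natDegree_derivative_le f) (.inl hpos.ne')
  rw [Polynomial.resultant_deriv hf] at hpq
  set r := (-1) ^ (f.natDegree * (f.natDegree - 1) / 2) * f.leadingCoeff * f.discr
  have hr : r ≠ 0 := by simp [r, hdiscr, Polynomial.ne_zero_of_degree_gt hf]
  refine ⟨Polynomial.C r⁻¹ * p, Polynomial.C r⁻¹ * q, ?_⟩
  calc Polynomial.C r⁻¹ * p * f + Polynomial.C r⁻¹ * q * f.derivative
      = Polynomial.C r⁻¹ * (f * p + f.derivative * q) := by ring
    _ = 1 := by rw [hpq, ← Polynomial.C_mul, inv_mul_cancel₀ hr, Polynomial.C_1]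

theorem exists_mul_eq_diagonal_mul {K n : Type*} [Field K] [IsAlgClosed K] [Fintype n]
    [DecidableEq n] {M : Matrix n n K} (hM : M.charpoly.Separable) :
    ∃ (P : Matrix n n K) (e : n → K), P.det ≠ 0 ∧ P * M = Matrix.diagonal e * P := by
  have hcard : Fintype.card n = Fintype.card (M.charpoly.rootSet K) := by
    rw [Polynomial.card_rootSet_eq_natDegree hM (IsAlgClosed.splits _),
      Matrix.charpoly_natDegree_eq_dim]
  let e := Fintype.equivOfCardEq hcard
  have heigen (i : n) : ∃ p, Module.End.HasEigenvector M.transpose.toLin' (e i : K) p := by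
    refine Module.End.HasEigenvalue.exists_hasEigenvector ?_
    have hroot := (Polynomial.mem_rootSet.1 (e i).2).2
    rw [Module.End.hasEigenvalue_iff_isRoot_charpoly]
    simpa using hroot
  choose P hP using heigen
  have hindep : LinearIndependent K (Matrix.of P).row :=
    Module.End.eigenvectors_linearIndependent' _ _ (Subtype.coe_injective.comp e.injective) P hP
  refine ⟨Matrix.of P, fun i => e i, ?_, ?_⟩
  · rw [Matrix.linearIndependent_rows_iff_isUnit, Matrix.isUnit_iff_isUnit_det] at hindep
    exact hindep.ne_zero
  · ext i j
    have h := congrFun (hP i).apply_eq_smul j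
    rw [Matrix.toLin'_apply, Matrix.mulVec_transpose] at h
    rw [Matrix.mul_apply_eq_vecMul, Matrix.diagonal_mul]
    exact h

section LineFrame

variable {R S : Type*} [CommRing R] [CommRing S]

/-- The matrix whose rows are the spanning vectors of two lines, themselves given by the rows of
`u` and of `v`. -/
def lineFrame (u v : Matrix (Fin 2) (Fin 4) R) : Matrix (Fin 4) (Fin 4) R :=
  Matrix.of ![u 0, u 1, v 0, v 1]

/-- The coordinates of the rows of `w` with respect to the rows of `lineFrame u v`, scaled by
`(lineFrame u v).det` to make them polynomial; only those with indices in `c` are kept. -/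
def frameCoords (c : Fin 2 → Fin 4) (u v w : Matrix (Fin 2) (Fin 4) R) : Matrix (Fin 2) (Fin 2) R :=
  (w * (lineFrame u v).adjugate).submatrix id c

theorem frameCoords_mul_add (u v w : Matrix (Fin 2) (Fin 4) R) :
    frameCoords ![0, 1] u v w * u + frameCoords ![2, 3] u v w * v = (lineFrame u v).det • w := by
  have hadj : w * (lineFrame u v).adjugate * lineFrame u v = (lineFrame u v).det • w := by
    rw [Matrix.mul_assoc, Matrix.adjugate_mul, Matrix.mul_smul, Matrix.mul_one]
  rw [← hadj]
  ext i j
  rw [Matrix.mul_apply (N := lineFrame u v), Fin.sum_univ_four, Matrix.add_apply,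
    Matrix.mul_apply, Matrix.mul_apply, Fin.sum_univ_two, Fin.sum_univ_two, ← add_assoc]
  rfl

theorem map_lineFrame (f : R →+* S) (u v : Matrix (Fin 2) (Fin 4) R) :
    (lineFrame u v).map f = lineFrame (u.map f) (v.map f) := by
  ext i j
  fin_cases i <;> rfl

theorem map_frameCoords (f : R →+* S) (c : Fin 2 → Fin 4) (u v w : Matrix (Fin 2) (Fin 4) R) :
    (frameCoords c u v w).map f = frameCoords c (u.map f) (v.map f) (w.map f) := by
  rw [frameCoords, ← Matrix.submatrix_map, Matrix.map_mul,
    ← RingHom.mapMatrix_apply f (_ : Matrix (Fin 4) (Fin 4) R), RingHom.map_adjugate,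
    RingHom.mapMatrix_apply, map_lineFrame]
  rfl

/-- The matrix of the projectivity of the line `u` that follows the transversals of `u`, `v`, `z`
from `u` to `v` and those of `u`, `v`, `w` back from `v` to `u`. Its fixed points are the points
of `u` on the common transversals of `u`, `v`, `w`, `z`. -/
def transversalMatrix (u v w z : Matrix (Fin 2) (Fin 4) R) : Matrix (Fin 2) (Fin 2) R :=
  (frameCoords ![0, 1] u v z).adjugate * frameCoords ![2, 3] u v z *
    (frameCoords ![2, 3] u v w).adjugate * frameCoords ![0, 1] u v w

/-- A polynomial in the coordinates of four lines whose nonvanishing means that `L 0` is skew to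
the other lines, `L 1` is skew to `L 3`, and there are two common transversals. -/
def transversalDiscr (L : Fin 4 → Matrix (Fin 2) (Fin 4) R) : R :=
  (lineFrame (L 0) (L 1)).det * (frameCoords ![2, 3] (L 0) (L 1) (L 2)).det *
    (frameCoords ![0, 1] (L 0) (L 1) (L 3)).det * (frameCoords ![2, 3] (L 0) (L 1) (L 3)).det *
      (transversalMatrix (L 0) (L 1) (L 2) (L 3)).discr

theorem map_transversalMatrix (f : R →+* S) (u v w z : Matrix (Fin 2) (Fin 4) R) :
    (transversalMatrix u v w z).map f =
      transversalMatrix (u.map f) (v.map f) (w.map f) (z.map f) := by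
  simp only [transversalMatrix, ← map_frameCoords, ← RingHom.mapMatrix_apply, map_mul,
    RingHom.map_adjugate]

theorem map_transversalDiscr (f : R →+* S) (L : Fin 4 → Matrix (Fin 2) (Fin 4) R) :
    f (transversalDiscr L) = transversalDiscr fun q => (L q).map f := by
  simp only [transversalDiscr, Matrix.discr_fin_two, map_mul, map_sub, map_pow, map_ofNat,
    RingHom.map_det, RingHom.mapMatrix_apply, AddMonoidHom.map_trace, map_lineFrame,
    map_frameCoords, map_transversalMatrix]

end LineFrame

theorem det_lineFrame_mul (P Q : Matrix (Fin 2) (Fin 2) ℂ) (u v : Matrix (Fin 2) (Fin 4) ℂ) :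
    (lineFrame (P * u) (Q * v)).det = P.det * Q.det * (lineFrame u v).det := by
  rw [← det_blockFrame, ← Matrix.det_mul]
  congr 1
  ext i j
  fin_cases i <;>
    simp [lineFrame, blockFrame, Matrix.mul_apply, Fin.sum_univ_two, Fin.sum_univ_four]

theorem span_pair_le_map_normalLine {D : ℂ} (hD : D ≠ 0) {T : Matrix (Fin 2) (Fin 2) ℂ}
    (hT : T.det ≠ 0) {w u v : Matrix (Fin 2) (Fin 4) ℂ} {x y : Fin 2 → ℂ}
    (h : T * (D • w) = Matrix.diagonal x * u + Matrix.diagonal y * v) :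
    Submodule.span ℂ {w 0, w 1} ≤ (normalLine ![x 0, y 0] ![x 1, y 1]).map
      ((lineFrame u v).submatrix (Equiv.swap 1 2) id).transpose.mulVecLin := by
  have hw : w = (D⁻¹ • T⁻¹) * (Matrix.diagonal x * u + Matrix.diagonal y * v) := by
    rw [← h, Matrix.smul_mul, ← Matrix.mul_assoc, Matrix.nonsing_inv_mul _ hT.isUnit,
      Matrix.one_mul, inv_smul_smul₀ hD]
  have hmem (i : Fin 2) : w i ∈ (normalLine ![x 0, y 0] ![x 1, y 1]).map
      ((lineFrame u v).submatrix (Equiv.swap 1 2) id).transpose.mulVecLin := by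
    rw [normalLine, Submodule.map_span, Set.image_pair, Submodule.mem_span_pair]
    refine ⟨D⁻¹ * T⁻¹ i 0, D⁻¹ * T⁻¹ i 1, ?_⟩
    rw [hw]
    ext j
    simp [lineFrame, Matrix.mul_apply, Matrix.mulVec, dotProduct, Fin.sum_univ_two,
      Fin.sum_univ_four, Matrix.diagonal_apply, Equiv.swap_apply_def]
    ring
  exact Submodule.span_le.2 (Set.pair_subset (hmem 0) (hmem 1))

theorem exists_mul_smul_eq_of_transversalDiscr_ne_zero {L : Fin 4 → Matrix (Fin 2) (Fin 4) ℂ}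
    (hL : transversalDiscr L ≠ 0) :
    ∃ P Q : Matrix (Fin 2) (Fin 2) ℂ, P.det ≠ 0 ∧ Q.det ≠ 0 ∧
      ∀ q, ∃ (D : ℂ) (T : Matrix (Fin 2) (Fin 2) ℂ) (x y : Fin 2 → ℂ), D ≠ 0 ∧ T.det ≠ 0 ∧
        (∀ j, ![x j, y j] ≠ 0) ∧
          T * (D • L q) = Matrix.diagonal x * (P * L 0) + Matrix.diagonal y * (Q * L 1) := by
  simp only [transversalDiscr, mul_ne_zero_iff] at hL
  obtain ⟨⟨⟨⟨hD, hY₂⟩, hX₃⟩, hY₃⟩, hdiscr⟩ := hL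
  obtain ⟨P, e, hP, hPe⟩ :=
    exists_mul_eq_diagonal_mul (separable_of_discr_ne_zero (by simp) hdiscr)
  rw [transversalMatrix] at hPe
  have h₂ := frameCoords_mul_add (L 0) (L 1) (L 2)
  have h₃ := frameCoords_mul_add (L 0) (L 1) (L 3)
  set X₂ := frameCoords ![0, 1] (L 0) (L 1) (L 2)
  set Y₂ := frameCoords ![2, 3] (L 0) (L 1) (L 2)
  set X₃ := frameCoords ![0, 1] (L 0) (L 1) (L 3)
  set Y₃ := frameCoords ![2, 3] (L 0) (L 1) (L 3)
  have hadj (T : Matrix (Fin 2) (Fin 2) ℂ) : T.adjugate.det = T.det := by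
    simp [Matrix.det_adjugate]
  have hPX : (P * X₃.adjugate).det ≠ 0 := by simp [hadj, hP, hX₃]
  have hQ : (P * X₃.adjugate * Y₃).det ≠ 0 := by rw [Matrix.det_mul]; exact mul_ne_zero hPX hY₃
  refine ⟨P, P * X₃.adjugate * Y₃, hP, hQ,
    fun | 0 => ?_ | 1 => ?_ | 2 => ?_ | 3 => ?_⟩
  · exact ⟨1, P, 1, 0, one_ne_zero, hP, by simp, by simp⟩
  · exact ⟨1, _, 0, 1, one_ne_zero, hQ, by simp, by simp⟩
  · refine ⟨_, P * X₃.adjugate * Y₃ * Y₂.adjugate, e, fun _ => Y₂.det, hD, ?_, by simp [hY₂], ?_⟩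
    · rw [Matrix.det_mul, hadj]
      exact mul_ne_zero hQ hY₂
    · rw [← h₂, Matrix.mul_add, ← Matrix.mul_assoc _ Y₂, Matrix.mul_assoc _ _ Y₂,
        Matrix.adjugate_mul, ← Matrix.mul_assoc _ P, ← hPe]
      simp [← Matrix.smul_eq_diagonal_mul, Matrix.mul_assoc]
  · refine ⟨_, P * X₃.adjugate, fun _ => X₃.det, 1, hD, hPX, by simp, ?_⟩
    rw [← h₃, Matrix.mul_add, ← Matrix.mul_assoc _ X₃, Matrix.mul_assoc _ _ X₃,
      Matrix.adjugate_mul]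
    simp [← Matrix.smul_eq_diagonal_mul, Matrix.mul_assoc]

theorem exists_frame_of_transversalDiscr_ne_zero {L : Fin 4 → Matrix (Fin 2) (Fin 4) ℂ}
    (hL : transversalDiscr L ≠ 0) : ∃ M : Matrix (Fin 4) (Fin 4) ℂ, M.det ≠ 0 ∧
      ∀ q, ∃ a b : Fin 2 → ℂ, a ≠ 0 ∧ b ≠ 0 ∧
        Submodule.span ℂ {L q 0, L q 1} ≤ (normalLine a b).map M.mulVecLin := by
  obtain ⟨P, Q, hP, hQ, hline⟩ := exists_mul_smul_eq_of_transversalDiscr_ne_zero hL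
  refine ⟨((lineFrame (P * L 0) (Q * L 1)).submatrix (Equiv.swap 1 2) id).transpose, ?_,
    fun q => ?_⟩
  · have hL₀₁ : (lineFrame (L 0) (L 1)).det ≠ 0 := by
      simp only [transversalDiscr, mul_ne_zero_iff] at hL
      exact hL.1.1.1.1
    rw [Matrix.det_transpose, Matrix.det_permute, det_lineFrame_mul]
    simp [hP, hQ, hL₀₁]
  · obtain ⟨D, T, x, y, hD, hT, hxy, hq⟩ := hline q
    exact ⟨_, _, hxy 0, hxy 1, span_pair_le_map_normalLine hD hT hq⟩

/-! ### General position -/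

section GeneralPosition

variable {K : Type*} [Field K] {s : ℕ}

theorem isGeneric_det_lineFrame_ne_zero {i j : Fin s} (hij : i ≠ j) :
    IsGeneric fun v : Fin s × Fin 2 × Fin 4 → K =>
      (lineFrame (.of fun k l => v (i, k, l)) (.of fun k l => v (j, k, l))).det ≠ 0 := by
  let Λ (i : Fin s) : Matrix (Fin 2) (Fin 4) (MvPolynomial (Fin s × Fin 2 × Fin 4) K) :=
    .of fun k l => X (i, k, l)
  have heval (v : Fin s × Fin 2 × Fin 4 → K) : eval v (lineFrame (Λ i) (Λ j)).det =
      (lineFrame (.of fun k l => v (i, k, l)) (.of fun k l => v (j, k, l))).det := by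
    rw [RingHom.map_det, RingHom.mapMatrix_apply, map_lineFrame]
    congr 2 <;> ext <;> simp [Λ]
  let v₀ : Fin s × Fin 2 × Fin 4 → K := fun p =>
    if p.1 = i then !![1, 0, 0, 0; 0, 1, 0, 0] p.2.1 p.2.2
    else !![0, 0, 1, 0; 0, 0, 0, 1] p.2.1 p.2.2
  have hone : lineFrame (.of fun k l => v₀ (i, k, l)) (.of fun k l => v₀ (j, k, l)) = 1 := by
    ext k l
    fin_cases k <;> fin_cases l <;> simp [lineFrame, v₀, hij.symm]
  simp only [← heval]
  exact IsGeneric.eval_ne_zero (v₀ := v₀) (by rw [heval, hone, Matrix.det_one]; exact one_ne_zero)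

theorem linearIndependent_of_det_lineFrame_ne_zero {u v : Matrix (Fin 2) (Fin 4) K}
    (h : (lineFrame u v).det ≠ 0) : LinearIndependent K ![u 0, u 1] := by
  have hrows : LinearIndependent K (lineFrame u v).row :=
    Matrix.linearIndependent_rows_of_det_ne_zero h
  have hpair : (lineFrame u v).row ∘ ![0, 1] = ![u 0, u 1] := by
    ext i : 1
    fin_cases i <;> rfl
  rw [← hpair]
  exact hrows.comp _ (by decide)

theorem disjoint_span_of_det_lineFrame_ne_zero {u v : Matrix (Fin 2) (Fin 4) K}
    (h : (lineFrame u v).det ≠ 0) :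
    Disjoint (Submodule.span K {u 0, u 1}) (Submodule.span K {v 0, v 1}) := by
  have hdisj := (Matrix.linearIndependent_rows_of_det_ne_zero h).disjoint_span_image
    (s := {0, 1}) (t := {2, 3}) (by simp)
  rwa [Set.image_pair, Set.image_pair] at hdisj

end GeneralPosition

theorem generalLines_of_isGeneric {s : ℕ} [Nontrivial (Fin s)]
    {Q : (Fin s → Submodule ℂ C4) → Prop}
    (hQ : IsGeneric fun v : Fin s × Fin 2 × Fin 4 → ℂ =>
      Q fun i => Submodule.span ℂ {fun k => v (i, 0, k), fun k => v (i, 1, k)}) :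
    GeneralLines s Q := by
  have hskew := IsGeneric.forall_finset (Finset.univ : Finset (Fin s)).offDiag fun p hp =>
    isGeneric_det_lineFrame_ne_zero (K := ℂ) (Finset.mem_offDiag.1 hp).2.2
  obtain ⟨P, hP, hPQ⟩ := hskew.and hQ
  refine ⟨P, hP, fun v hv => ?_⟩
  obtain ⟨hdets, hQv⟩ := hPQ _ hv
  have hdet {i j : Fin s} (hij : i ≠ j) : (lineFrame (.of (v i)) (.of (v j))).det ≠ 0 :=
    hdets (i, j) (by simpa using hij)
  refine ⟨fun i => ?_, fun i j hij => ?_, hQv⟩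
  · obtain ⟨j, hj⟩ := exists_ne i
    exact linearIndependent_of_det_lineFrame_ne_zero (hdet hj.symm)
  · exact (disjoint_span_of_det_lineFrame_ne_zero (hdet hij)).eq_bot

/-- Four lines with exactly two common transversals. -/
def fourLines : Fin 4 → Matrix (Fin 2) (Fin 4) ℂ :=
  ![!![1, 0, 0, 0; 0, 1, 0, 0], !![0, 0, 1, 0; 0, 0, 0, 1],
    !![1, 0, 1, 0; 0, 1, 0, 1], !![1, 0, 1, 0; 0, 1, 0, 2]]

theorem transversalDiscr_fourLines : transversalDiscr fourLines ≠ 0 := by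
  have hframe : lineFrame (fourLines 0) (fourLines 1) = 1 := by
    ext k l
    fin_cases k <;> fin_cases l <;> simp [lineFrame, fourLines]
  have hcoords (c : Fin 2 → Fin 4) (w : Matrix (Fin 2) (Fin 4) ℂ) :
      frameCoords c (fourLines 0) (fourLines 1) w = w.submatrix id c := by
    rw [frameCoords, hframe, Matrix.adjugate_one, Matrix.mul_one]
  have hX₂ : (fourLines 2).submatrix id ![0, 1] = 1 := by
    ext k l
    fin_cases k <;> fin_cases l <;> simp [fourLines]
  have hY₂ : (fourLines 2).submatrix id ![2, 3] = 1 := by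
    ext k l
    fin_cases k <;> fin_cases l <;> simp [fourLines]
  have hX₃ : (fourLines 3).submatrix id ![0, 1] = 1 := by
    ext k l
    fin_cases k <;> fin_cases l <;> simp [fourLines]
  have hY₃ : (fourLines 3).submatrix id ![2, 3] = Matrix.diagonal ![1, 2] := by
    ext k l
    fin_cases k <;> fin_cases l <;> simp [fourLines]
  simp only [transversalDiscr, transversalMatrix, hcoords, hframe, hX₂, hY₂, hX₃, hY₃,
    Matrix.adjugate_one, Matrix.det_one, one_mul, mul_one, Matrix.discr_fin_two,
    Matrix.det_diagonal, Matrix.trace_diagonal]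
  norm_num [Fin.sum_univ_two]

theorem isGeneric_transversalDiscr_ne_zero {s : ℕ} {ι : Fin 4 → Fin s}
    (hι : Function.Injective ι) :
    IsGeneric fun v : Fin s × Fin 2 × Fin 4 → ℂ =>
      transversalDiscr (fun q => .of fun j k => v (ι q, j, k)) ≠ 0 := by
  let Λ (q : Fin 4) : Matrix (Fin 2) (Fin 4) (MvPolynomial (Fin s × Fin 2 × Fin 4) ℂ) :=
    .of fun j k => X (ι q, j, k)
  have heval (v : Fin s × Fin 2 × Fin 4 → ℂ) : eval v (transversalDiscr Λ) =
      transversalDiscr fun q => .of fun j k => v (ι q, j, k) := by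
    rw [map_transversalDiscr]
    congr 1
    ext
    simp [Λ]
  simp only [← heval]
  refine IsGeneric.eval_ne_zero
    (v₀ := fun p => Function.extend ι fourLines 0 p.1 p.2.1 p.2.2) ?_
  simp only [heval, hι.extend_apply]
  exact transversalDiscr_fourLines

theorem linSys_ne_bot_of_transversalDiscr_ne_zero {v : Fin 9 → Fin 2 → C4}
    (hv : transversalDiscr (fun q => .of (v (Fin.castAdd 5 q))) ≠ 0) :
    linSys 10 (fun i => Submodule.span ℂ {v i 0, v i 1}) ![3, 3, 3, 3, 1, 1, 1, 1, 1] ≠ ⊥ := by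
  obtain ⟨M, hM, hline⟩ := exists_frame_of_transversalDiscr_ne_zero hv
  choose a b ha hb hab using hline
  obtain ⟨F, hF₀, hF, htriple, hsimple⟩ := exists_form_of_normalLine ha hb
    fun l j => M⁻¹.mulVec (v (Fin.natAdd 4 l) j)
  have hmem (i : Fin 9) : bind₁ M⁻¹.toMvPolynomial F ∈
      lineIdeal (Submodule.span ℂ {v i 0, v i 1}) ^ ![3, 3, 3, 3, 1, 1, 1, 1, 1] i := by
    refine Fin.addCases (m := 4) (n := 5) (fun q => ?_) (fun l => ?_) i
    · have hm : ![3, 3, 3, 3, 1, 1, 1, 1, 1] (Fin.castAdd 5 q) = 3 := by fin_cases q <;> rfl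
      rw [hm]
      exact bind₁_toMvPolynomial_mem_lineIdeal_pow
        ((hab q).trans (map_mulVecLin_le_comap_inv hM.isUnit _)) (htriple q)
    · have hm : ![3, 3, 3, 3, 1, 1, 1, 1, 1] (Fin.natAdd 4 l) = 1 := by fin_cases l <;> rfl
      rw [hm]
      refine bind₁_toMvPolynomial_mem_lineIdeal_pow ?_ (by simpa using hsimple l)
      rw [← Submodule.map_le_iff_le_comap, Submodule.map_span, Set.image_pair]
      rfl
  refine (Submodule.ne_bot_iff _).2 ⟨_, ⟨isHomogeneous_bind₁_toMvPolynomial hF M⁻¹,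
    (Submodule.mem_iInf _).2 hmem⟩, fun h => hF₀ ?_⟩
  have hcancel := bind₁_toMvPolynomial_inv_cancel (Matrix.isUnit_nonsing_inv_det M hM.isUnit) F
  rw [← hcancel, h, map_zero]

/-- The system `𝓛_{10}(3,3,3,3,1,1,1,1,1)` for nine general lines has dimension
exactly 1, yet `binom(13,3) = 286 < 287 = 4·58 + 5·11`, so it has negative
virtual dimension and is special (unexpected). -/
theorem stmt_6 :
    GeneralLines 9 (fun L =>
      Module.finrank ℂ ↥(linSys 10 L ![3, 3, 3, 3, 1, 1, 1, 1, 1]) = 1) ∧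
    Nat.choose 13 3 < 4 * 58 + 5 * 11 := by
  refine ⟨generalLines_of_isGeneric ?_, by decide⟩
  have hseparates :=
    (SpecialPosition.separates (Complex.isPrimitiveRoot_exp 5 (by norm_num))).isGeneric
  have htransversals := isGeneric_transversalDiscr_ne_zero (Fin.castAdd_injective 4 5)
  refine (hseparates.and htransversals).mono fun v ⟨hsep, htrans⟩ => ?_
  have hne := linSys_ne_bot_of_transversalDiscr_ne_zero (v := fun i j k => v (i, j, k)) htrans
  exact hsep.finrank_linSys_eq_one hne
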